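/- arXiv:2109.09877 — 2 statements merged into one kernel-verified Lean document; each statement's English description precedes it below -/
import Mathlib

section
/- Let p > 3 be a prime. Then the rational number ∑_{n=0}^{(p-1)/2} (6n+1)/256^n · C(2n,n)^3 is congruent to (-1)^{(p-1)/2} · p + (-1)^{(p-1)/2} · (7/24) · p^4 · B_{p-3} modulo p^5 (as rational numbers). -/
/-- Two rationals `a` and `b` are congruent modulo `p^r`:
the `p`-adic valuation of `a - b` is at least `r`, i.e. `a - b = c * p^r`
with the denominator of `c` not divisible by `p`. -/
def ratCongr (p r : ℕ) (a b : ℚ) : Prop :=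
  ∃ c : ℚ, a - b = c * (p : ℚ) ^ r ∧ ¬ (p ∣ c.den)

/-- The Fermat quotient `q_p(2) = (2^(p-1) - 1)/p` (an integer for odd primes),
viewed as a rational number. -/
def fermatQ (p : ℕ) : ℚ := ((2 : ℚ) ^ (p - 1) - 1) / p

open Finset

section WilfZeilberger

open Polynomial

/-- The product `(1 + u)(3 + u)⋯(2n - 1 + u)`. -/
def oddShift (u : ℚ) (n : ℕ) : ℚ := ∏ i ∈ range n, (2 * (i : ℚ) + 1 + u)

/-- The product `(4 + u)(8 + u)⋯(4n + u)`. -/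
def fourShift (u : ℚ) (n : ℕ) : ℚ := ∏ i ∈ range n, (4 * ((i : ℚ) + 1) + u)

lemma oddShift_succ (u : ℚ) (n : ℕ) :
    oddShift u (n + 1) = oddShift u n * (2 * n + 1 + u) := prod_range_succ _ _

lemma fourShift_succ (u : ℚ) (n : ℕ) :
    fourShift u (n + 1) = fourShift u n * (4 * (n + 1) + u) := prod_range_succ _ _

lemma oddShift_add_two (u : ℚ) (n : ℕ) :
    oddShift (u + 2) n * (u + 1) = oddShift u n * (2 * n + 1 + u) := by
  induction n with
  | zero => simp [oddShift]; ring
  | succ n ih =>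
    rw [oddShift_succ, oddShift_succ]
    push_cast
    linear_combination (2 * (n : ℚ) + 1 + (u + 2)) * ih

lemma fourShift_add_four (u : ℚ) (n : ℕ) :
    fourShift (u + 4) n * (u + 4) = fourShift u n * (4 * (n + 1) + u) := by
  induction n with
  | zero => simp [fourShift]; ring
  | succ n ih =>
    rw [fourShift_succ, fourShift_succ]
    push_cast
    linear_combination (4 * ((n : ℚ) + 1) + (u + 4)) * ih

lemma oddShift_add_four (u : ℚ) (n : ℕ) :
    oddShift (u + 4) n * ((u + 1) * (u + 3)) =
      oddShift u n * ((2 * n + 1 + u) * (2 * n + 3 + u)) := by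
  have h₁ := oddShift_add_two u n
  have h₂ := oddShift_add_two (u + 2) n
  rw [show u + 2 + 2 = u + 4 by ring] at h₂
  linear_combination (u + 1) * h₂ + (2 * (n : ℚ) + 3 + u) * h₁

lemma fourShift_ne_zero {u : ℤ} (hu : Odd u) (n : ℕ) : fourShift u n ≠ 0 := by
  refine prod_ne_zero_iff.mpr fun i _ h => ?_
  have : 4 * ((i : ℤ) + 1) + u = 0 := by exact_mod_cast h
  obtain ⟨k, rfl⟩ := hu
  omega

lemma oddShift_neg_eq_zero {m n : ℕ} (h : m < n) : oddShift (-(2 * m + 1)) n = 0 :=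
  prod_eq_zero (mem_range.mpr h) (by ring)

/-- The normalised central binomial coefficient `C(2n, n) / 4 ^ n`. -/
def centralRatio (n : ℕ) : ℚ := (n.centralBinom : ℚ) / 4 ^ n

lemma centralRatio_succ (n : ℕ) :
    centralRatio (n + 1) * (2 * (n + 1)) = centralRatio n * (2 * n + 1) := by
  have h : ((n : ℚ) + 1) * (n + 1).centralBinom = 2 * (2 * n + 1) * n.centralBinom := by
    exact_mod_cast n.succ_mul_centralBinom_succ
  unfold centralRatio
  field_simp
  rw [pow_succ]
  linear_combination (2 * 4 ^ n : ℚ) * h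

/-- The summand deformed by the parameter `u`; at `u = 0` it is the summand of the theorem. -/
def deformedTerm (u : ℚ) (k : ℕ) : ℚ :=
  (6 * k + 1) * centralRatio k * (oddShift u k * oddShift (-u) k) /
    (fourShift u k * fourShift (-u) k)

lemma sum_deformedTerm_add_four {u : ℤ} (hu : Odd u) (hpos : 0 < u) (n : ℕ) :
    ∑ k ∈ range n, (deformedTerm (u + 4) k / (u + 4) - deformedTerm u k / u) =
      -8 * n * (2 * n - 1) * centralRatio n * (oddShift u n * oddShift (-u - 4) n) /
        ((u + 1) * (u + 3) * (fourShift u n * fourShift (-u - 4) n)) := by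
  have hq : (0 : ℚ) < u := by exact_mod_cast hpos
  have hn4 : ∀ n : ℕ, 4 * (n : ℚ) - u ≠ 0 := fun n h => by
    have : 4 * (n : ℤ) - u = 0 := by exact_mod_cast h
    obtain ⟨k, rfl⟩ := hu
    omega
  have hf₁ : ∀ n, fourShift u n ≠ 0 := fourShift_ne_zero hu
  have hf₂ : ∀ n, fourShift (-u - 4) n ≠ 0 := fun n => by
    have := fourShift_ne_zero (u := -u - 4) (by obtain ⟨k, rfl⟩ := hu; exact ⟨-k - 3, by ring⟩) n
    push_cast at this
    exact this
  induction n with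
  | zero => simp
  | succ n ih =>
    have e₁ := oddShift_add_four u n
    have e₂ := oddShift_add_four (-u - 4) n
    have e₃ := fourShift_add_four u n
    have e₄ := fourShift_add_four (-u - 4) n
    have e₅ := centralRatio_succ n
    rw [show -(u : ℚ) - 4 + 4 = -u by ring] at e₂ e₄
    have f₁ : oddShift (u + 4) n =
        oddShift u n * ((2 * n + 1 + u) * (2 * n + 3 + u)) / ((u + 1) * (u + 3)) := by
      rw [eq_div_iff (by positivity)]; exact e₁
    have f₂ : oddShift (-u) n =
        oddShift (-u - 4) n * ((2 * n - 3 - u) * (2 * n - 1 - u)) / ((u + 1) * (u + 3)) := by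
      rw [eq_div_iff (by positivity)]; linear_combination e₂
    have f₃ : fourShift (u + 4) n = fourShift u n * (4 * (n + 1) + u) / (u + 4) := by
      rw [eq_div_iff (by positivity)]; exact e₃
    have f₄ : fourShift (-u) n = fourShift (-u - 4) n * (4 * n - u) / (-u) := by
      rw [eq_div_iff (by simpa using hq.ne')]; linear_combination e₄
    have f₅ : centralRatio (n + 1) = centralRatio n * (2 * n + 1) / (2 * (n + 1)) := by
      rw [eq_div_iff (by positivity)]; exact e₅
    have g₁ := hf₁ n
    have g₂ := hf₂ n
    have g₃ := hn4 n
    have g₄ : 4 * ((n : ℚ) + 1) + u ≠ 0 := by positivity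
    have g₅ : (u : ℚ) ≠ 0 := hq.ne'
    have g₆ : (u : ℚ) + 1 ≠ 0 := by positivity
    have g₇ : (u : ℚ) + 3 ≠ 0 := by positivity
    have g₈ : (u : ℚ) + 4 ≠ 0 := by positivity
    rw [sum_range_succ, ih]
    unfold deformedTerm
    rw [show -((u : ℚ) + 4) = -u - 4 by ring, f₁, f₂, f₃, f₄, oddShift_succ, oddShift_succ,
      fourShift_succ, fourShift_succ, f₅]
    have g₉ : 4 * ((n : ℚ) + 1) + (-u - 4) ≠ 0 := by
      rw [show 4 * ((n : ℚ) + 1) + (-u - 4) = 4 * n - u by ring]; exact g₃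
    push_cast
    generalize oddShift (u : ℚ) n = Q
    generalize oddShift (-(u : ℚ) - 4) n = R
    generalize fourShift (u : ℚ) n = d₁ at *
    generalize fourShift (-(u : ℚ) - 4) n = d₂ at *
    generalize centralRatio n = a at *
    rw [show 4 * ((n : ℚ) + 1) + (-u - 4) = 4 * n - u by ring]
    have g₀ : (n : ℚ) + 1 ≠ 0 := by positivity
    generalize (u : ℚ) = v at *
    generalize (n : ℚ) = x at *
    clear ih e₁ e₂ e₃ e₄ e₅ f₁ f₂ f₃ f₄ f₅ g₉ hn4 hf₁ hf₂
    generalize hz : 4 * x - v = z at *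
    field_simp
    rw [← hz]
    ring

lemma deformedTerm_eq_zero {m k : ℕ} (h : m < k) : deformedTerm (2 * m + 1) k = 0 := by
  unfold deformedTerm
  rw [oddShift_neg_eq_zero h]
  simp

lemma sum_deformedTerm_odd (m n : ℕ) (h : m < n) :
    ∑ k ∈ range n, deformedTerm (2 * m + 1) k = (-1) ^ m * (2 * m + 1) := by
  have extend : ∀ m n n' : ℕ, m < n → n ≤ n' →
      ∑ k ∈ range n', deformedTerm (2 * m + 1) k = ∑ k ∈ range n, deformedTerm (2 * m + 1) k := by
    intro m n n' hn hn'
    refine (sum_subset (range_mono hn') fun k _ hk => deformedTerm_eq_zero ?_).symm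
    rw [mem_range] at hk
    omega
  induction m using Nat.twoStepInduction generalizing n with
  | zero =>
    rw [extend 0 1 n one_pos h]
    simp [deformedTerm, oddShift, fourShift, centralRatio]
  | one =>
    rw [extend 1 2 n one_lt_two h]
    norm_num [deformedTerm, oddShift, fourShift, centralRatio, sum_range_succ, prod_range_succ,
      Nat.centralBinom, Nat.choose]
  | more m ih _ =>
    have key := sum_deformedTerm_add_four (u := 2 * m + 1) ⟨m, rfl⟩ (by positivity) n
    have hz : oddShift (-((2 * (m : ℤ) + 1 : ℤ) : ℚ) - 4) n = 0 := by
      have := oddShift_neg_eq_zero h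
      push_cast at this ⊢
      rw [← this]
      congr 1
      ring
    rw [hz, mul_zero, mul_zero, zero_div, sum_sub_distrib, ← sum_div, ← sum_div, sub_eq_zero] at key
    push_cast at key
    rw [ih n (by omega)] at key
    push_cast
    rw [show 2 * ((m : ℚ) + 2) + 1 = 2 * m + 1 + 4 by ring]
    rw [mul_div_assoc, div_self (by positivity), mul_one, div_eq_iff (by positivity)] at key
    rw [key]
    ring

lemma fourShift_zero_ne_zero (n : ℕ) : fourShift 0 n ≠ 0 :=
  prod_ne_zero_iff.mpr fun i _ => by positivity

/-- The sequence with `r 0 = 1`, `r 1 = (1 + t) / (1 - t)` and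
`r (m + 2) = r m * (2m + 3 + t) / (2m + 3 - t)`. -/
def ratioSeq (t : ℚ) : ℕ → ℚ
  | 0 => 1
  | 1 => (1 + t) / (1 - t)
  | m + 2 => ratioSeq t m * ((2 * m + 3 + t) / (2 * m + 3 - t))

lemma ratioSeq_mul_fourShift (n m : ℕ) :
    (-1) ^ m * (2 * m + 1) * (fourShift (2 * m + 1) n * fourShift (-(2 * m + 1)) n) =
      ratioSeq (4 * n + 2) m * (fourShift 1 n * fourShift (-1) n) := by
  induction m using Nat.twoStepInduction with
  | zero => simp [ratioSeq]
  | one =>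
    have h₁ := fourShift_add_four (-3) n
    have h₂ := fourShift_add_four (-1) n
    have h : (1 - (4 * (n : ℚ) + 2)) ≠ 0 := by
      rw [show (1 - (4 * (n : ℚ) + 2)) = -(4 * n + 1) by ring]
      exact neg_ne_zero.mpr (by positivity)
    norm_num at h₁ h₂
    norm_num [ratioSeq]
    field_simp
    rw [h₁]
    linear_combination (4 * (n : ℚ) + 1) * fourShift (-3) n * h₂
  | more m ih _ =>
    have h₁ := fourShift_add_four (2 * m + 1) n
    have h₂ := fourShift_add_four (-(2 * m + 1) - 4) n
    have h : 2 * (m : ℚ) + 3 - (4 * n + 2) ≠ 0 := fun h => by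
      have : 2 * (m : ℤ) + 3 - (4 * n + 2) = 0 := by exact_mod_cast h
      omega
    rw [ratioSeq]
    push_cast
    rw [sub_add_cancel] at h₂
    rw [show 2 * ((m : ℚ) + 2) + 1 = 2 * m + 1 + 4 by ring,
      show -(2 * (m : ℚ) + 1 + 4) = -(2 * m + 1) - 4 by ring]
    have h₃ : ratioSeq (4 * n + 2) m * ((2 * m + 3 + (4 * n + 2)) / (2 * m + 3 - (4 * n + 2))) *
        (fourShift 1 n * fourShift (-1) n) = (-1) ^ m * (2 * m + 1) *
          (fourShift (2 * m + 1) n * fourShift (-(2 * m + 1)) n) *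
            ((2 * m + 3 + (4 * n + 2)) / (2 * m + 3 - (4 * n + 2))) := by
      rw [ih]; ring
    rw [h₃, pow_add]
    field_simp
    linear_combination fourShift (-(2 * m + 1) - 4) n * (2 * m + 3 - (4 * n + 2)) * h₁ +
      fourShift (2 * m + 1) n * (4 * (n + 1) + (2 * m + 1)) * h₂

/-- The polynomial in `u ^ 2` obtained by clearing denominators in a sum of `deformedTerm`s. -/
noncomputable def clearedSum (n : ℕ) : ℚ[X] :=
  ∑ k ∈ range (n + 1), C ((6 * (k : ℚ) + 1) * centralRatio k) *
    ((∏ i ∈ range k, (C ((2 * (i : ℚ) + 1) ^ 2) - X)) *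
      ∏ i ∈ Ico k n, (C ((4 * ((i : ℚ) + 1)) ^ 2) - X))

lemma degree_clearedSum_lt (n : ℕ) : (clearedSum n).degree < (range (n + 1)).card := by
  rw [card_range, Nat.cast_withBot, ← Nat.cast_withBot, degree_lt_iff_coeff_zero]
  intro j hj
  rw [clearedSum, finsetSum_coeff]
  refine sum_eq_zero fun k hk => coeff_eq_zero_of_natDegree_lt (lt_of_le_of_lt ?_ hj)
  refine (natDegree_C_mul_le _ _).trans (natDegree_mul_le.trans ?_)
  have h : ∀ (s : Finset ℕ) (f : ℕ → ℚ), (∏ i ∈ s, (C (f i) - X)).natDegree ≤ s.card := by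
    intro s f
    refine (natDegree_prod_le _ _).trans ?_
    rw [card_eq_sum_ones]
    refine sum_le_sum fun i _ => (natDegree_sub_le _ _).trans ?_
    simp
  have h₁ := h (range k) fun i => (2 * (i : ℚ) + 1) ^ 2
  have h₂ := h (Ico k n) fun i => (4 * ((i : ℚ) + 1)) ^ 2
  rw [card_range] at h₁
  rw [Nat.card_Ico] at h₂
  beta_reduce at h₁ h₂
  rw [mem_range] at hk
  omega

lemma eval_clearedSum {u : ℚ} (n : ℕ) (h₁ : fourShift u n ≠ 0) (h₂ : fourShift (-u) n ≠ 0) :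
    (clearedSum n).eval (u ^ 2) =
      (∑ k ∈ range (n + 1), deformedTerm u k) * (fourShift u n * fourShift (-u) n) := by
  rw [clearedSum, eval_finsetSum, sum_mul]
  refine sum_congr rfl fun k hk => ?_
  have hk : k ≤ n := by rw [mem_range] at hk; omega
  have e₁ : fourShift u n = fourShift u k * ∏ i ∈ Ico k n, (4 * ((i : ℚ) + 1) + u) :=
    (prod_range_mul_prod_Ico _ hk).symm
  have e₂ : fourShift (-u) n = fourShift (-u) k * ∏ i ∈ Ico k n, (4 * ((i : ℚ) + 1) + -u) :=
    (prod_range_mul_prod_Ico _ hk).symm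
  have g₁ : fourShift u k ≠ 0 := left_ne_zero_of_mul (e₁ ▸ h₁)
  have g₂ : fourShift (-u) k ≠ 0 := left_ne_zero_of_mul (e₂ ▸ h₂)
  have e₃ : ∏ i ∈ range k, ((2 * (i : ℚ) + 1) ^ 2 - u ^ 2) = oddShift u k * oddShift (-u) k := by
    rw [oddShift, oddShift, ← prod_mul_distrib]
    exact prod_congr rfl fun i _ => by ring
  have e₄ : ∏ i ∈ Ico k n, ((4 * ((i : ℚ) + 1)) ^ 2 - u ^ 2) =
      (∏ i ∈ Ico k n, (4 * ((i : ℚ) + 1) + u)) * ∏ i ∈ Ico k n, (4 * ((i : ℚ) + 1) + -u) := by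
    rw [← prod_mul_distrib]
    exact prod_congr rfl fun i _ => by ring
  rw [eval_mul, eval_mul, eval_C, eval_prod, eval_prod]
  simp only [eval_sub, eval_C, eval_X]
  rw [e₃, e₄, e₁, e₂, deformedTerm]
  field_simp

/-- The value at `0` of the Lagrange basis polynomials for the nodes `1, 9, 25, …, (2n + 1) ^ 2`. -/
noncomputable def lagrangeWeight (n m : ℕ) : ℚ :=
  ∏ j ∈ (range (n + 1)).erase m,
    (2 * (j : ℚ) + 1) ^ 2 / ((2 * (j : ℚ) + 1) ^ 2 - (2 * (m : ℚ) + 1) ^ 2)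

lemma odd_sq_sub_odd_sq_ne_zero {j m : ℕ} (h : j ≠ m) :
    (2 * (j : ℚ) + 1) ^ 2 - (2 * (m : ℚ) + 1) ^ 2 ≠ 0 := by
  rw [show (2 * (j : ℚ) + 1) ^ 2 - (2 * (m : ℚ) + 1) ^ 2 = 4 * (j - m) * (j + m + 1) by ring]
  have : (j : ℚ) - m ≠ 0 := sub_ne_zero.mpr (by exact_mod_cast h)
  positivity

lemma eval_basis_eq_lagrangeWeight (n m : ℕ) :
    (Lagrange.basis (range (n + 1)) (fun j : ℕ => (2 * (j : ℚ) + 1) ^ 2) m).eval 0 =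
      lagrangeWeight n m := by
  rw [Lagrange.basis, eval_prod, lagrangeWeight]
  refine prod_congr rfl fun j hj => ?_
  have h := odd_sq_sub_odd_sq_ne_zero (ne_of_mem_erase hj)
  have h' : (2 * (m : ℚ) + 1) ^ 2 - (2 * (j : ℚ) + 1) ^ 2 ≠ 0 := by
    rw [← neg_sub]; exact neg_ne_zero.mpr h
  simp only [Lagrange.basisDivisor, eval_mul, eval_C, eval_sub, eval_X]
  field_simp
  ring

lemma injOn_odd_sq (s : Set ℕ) : Set.InjOn (fun j : ℕ => (2 * (j : ℚ) + 1) ^ 2) s :=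
  fun _ _ _ _ h => by_contra fun hne => odd_sq_sub_odd_sq_ne_zero hne (sub_eq_zero.mpr h)

lemma sum_lagrangeWeight (n : ℕ) : ∑ m ∈ range (n + 1), lagrangeWeight n m = 1 := by
  have h := congrArg (eval 0) (Lagrange.sum_basis (injOn_odd_sq (range (n + 1)))
    nonempty_range_add_one)
  rw [eval_finsetSum, eval_one] at h
  rw [← h]
  exact sum_congr rfl fun m _ => (eval_basis_eq_lagrangeWeight n m).symm

lemma sum_deformedTerm_zero_mul (n : ℕ) :
    (∑ k ∈ range (n + 1), deformedTerm 0 k) * (fourShift 0 n) ^ 2 =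
      (fourShift 1 n * fourShift (-1) n) *
        ∑ m ∈ range (n + 1), ratioSeq (4 * n + 2) m * lagrangeWeight n m := by
  have h₀ := eval_clearedSum (u := 0) n (fourShift_zero_ne_zero n)
    (by rw [neg_zero]; exact fourShift_zero_ne_zero n)
  rw [neg_zero, zero_pow two_ne_zero] at h₀
  have h := Lagrange.eq_interpolate_of_eval_eq (s := range (n + 1))
    (r := fun m : ℕ => ratioSeq (4 * n + 2) m * (fourShift 1 n * fourShift (-1) n))
    (v := fun j : ℕ => (2 * (j : ℚ) + 1) ^ 2) (injOn_odd_sq _) (degree_clearedSum_lt n) (by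
      intro m hm
      rw [mem_range] at hm
      have odd₁ : fourShift (2 * m + 1) n ≠ 0 := by
        have := fourShift_ne_zero (u := 2 * m + 1) ⟨m, rfl⟩ n
        push_cast at this
        exact this
      have odd₂ : fourShift (-(2 * m + 1)) n ≠ 0 := by
        have := fourShift_ne_zero (u := -(2 * m + 1)) ⟨-m - 1, by ring⟩ n
        push_cast at this
        convert this using 2
      rw [eval_clearedSum n odd₁ odd₂, sum_deformedTerm_odd m (n + 1) hm,
        ratioSeq_mul_fourShift])
  rw [sq, ← h₀, h, Lagrange.interpolate_apply, eval_finsetSum, mul_sum]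
  refine sum_congr rfl fun m _ => ?_
  rw [eval_mul, eval_C, eval_basis_eq_lagrangeWeight]
  ring

lemma deformedTerm_zero (k : ℕ) :
    deformedTerm 0 k = (6 * (k : ℚ) + 1) / 256 ^ k * ((2 * k).choose k : ℚ) ^ 3 := by
  have h : oddShift 0 k = centralRatio k * (2 ^ k * k.factorial) := by
    induction k with
    | zero => simp [oddShift, centralRatio]
    | succ k ih =>
      rw [oddShift_succ, ih, pow_succ, Nat.factorial_succ]
      push_cast
      linear_combination -(2 ^ k * (k.factorial : ℚ)) * centralRatio_succ k
  have h' : fourShift 0 k = 4 ^ k * k.factorial := by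
    clear h
    induction k with
    | zero => simp [fourShift]
    | succ k ih =>
      rw [fourShift_succ, ih, pow_succ, Nat.factorial_succ]
      push_cast
      ring
  have : (k.factorial : ℚ) ≠ 0 := by positivity
  rw [deformedTerm, neg_zero, h, h', centralRatio, Nat.centralBinom,
    show (256 : ℚ) ^ k = 4 ^ k * 4 ^ k * 4 ^ k * 4 ^ k by
      rw [← mul_pow, ← mul_pow, ← mul_pow]; norm_num,
    show (4 : ℚ) ^ k = 2 ^ k * 2 ^ k by rw [← mul_pow]; norm_num]
  field_simp

end WilfZeilberger

section Reduction

variable {p : ℕ} [Fact p.Prime]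

/-- The rational `x` is `p`-integral, with residue `a` modulo `p`. -/
structure ReducesTo (x : ℚ) (a : ZMod p) : Prop where
  den_ne_zero : (x.den : ZMod p) ≠ 0
  cast_eq : (x : ZMod p) = a

/-- The rational `x` is `p`-integral. -/
def IsIntegralAt (p : ℕ) [Fact p.Prime] (x : ℚ) : Prop := ∃ a : ZMod p, ReducesTo x a

namespace ReducesTo

variable {x y : ℚ} {a b : ZMod p}

lemma intCast (z : ℤ) : ReducesTo (z : ℚ) (z : ZMod p) := ⟨by simp, by simp⟩

lemma natCast (n : ℕ) : ReducesTo (n : ℚ) (n : ZMod p) := ⟨by simp, by simp⟩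

lemma one : ReducesTo 1 (1 : ZMod p) := by simpa using natCast (p := p) 1

lemma zero : ReducesTo 0 (0 : ZMod p) := by simpa using natCast (p := p) 0

lemma ofNat (n : ℕ) [n.AtLeastTwo] :
    ReducesTo (OfNat.ofNat n : ℚ) (OfNat.ofNat n : ZMod p) :=
  ⟨by simp, by simp⟩

lemma self : ReducesTo (p : ℚ) (0 : ZMod p) := by simpa using natCast (p := p) p

lemma mul (hx : ReducesTo x a) (hy : ReducesTo y b) : ReducesTo (x * y) (a * b) where
  den_ne_zero h := by
    have h' := (Nat.cast_dvd_cast (α := ZMod p) (Rat.mul_den_dvd x y))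
    rw [h, zero_dvd_iff, Nat.cast_mul] at h'
    exact mul_ne_zero hx.den_ne_zero hy.den_ne_zero h'
  cast_eq := by
    rw [Rat.cast_mul_of_ne_zero hx.den_ne_zero hy.den_ne_zero, hx.cast_eq, hy.cast_eq]

lemma add (hx : ReducesTo x a) (hy : ReducesTo y b) : ReducesTo (x + y) (a + b) where
  den_ne_zero h := by
    have h' := (Nat.cast_dvd_cast (α := ZMod p) (Rat.add_den_dvd x y))
    rw [h, zero_dvd_iff, Nat.cast_mul] at h'
    exact mul_ne_zero hx.den_ne_zero hy.den_ne_zero h'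
  cast_eq := by
    rw [Rat.cast_add_of_ne_zero hx.den_ne_zero hy.den_ne_zero, hx.cast_eq, hy.cast_eq]

lemma neg (hx : ReducesTo x a) : ReducesTo (-x) (-a) := by
  simpa using (intCast (p := p) (-1)).mul hx

lemma sub (hx : ReducesTo x a) (hy : ReducesTo y b) : ReducesTo (x - y) (a - b) := by
  simpa [sub_eq_add_neg] using hx.add hy.neg

lemma pow (hx : ReducesTo x a) (n : ℕ) : ReducesTo (x ^ n) (a ^ n) := by
  induction n with
  | zero => simpa using one
  | succ n ih => rw [pow_succ, pow_succ]; exact ih.mul hx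

lemma inv (hx : ReducesTo x a) (ha : a ≠ 0) : ReducesTo x⁻¹ a⁻¹ := by
  have hn : (x.num : ZMod p) ≠ 0 := fun h => ha (by rw [← hx.cast_eq, Rat.cast_def, h, zero_div])
  have hq : x.num ≠ 0 := fun h => hn (by simp [h])
  refine ⟨fun h => hn ?_, by rw [Rat.cast_inv_of_ne_zero hn, hx.cast_eq]⟩
  rw [Rat.den_inv, if_neg hq, ZMod.natCast_eq_zero_iff] at h
  rw [ZMod.intCast_zmod_eq_zero_iff_dvd]
  exact Int.natCast_dvd.mpr h

lemma div (hx : ReducesTo x a) (hy : ReducesTo y b) (hb : b ≠ 0) :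
    ReducesTo (x / y) (a / b) := by
  rw [div_eq_mul_inv, div_eq_mul_inv]; exact hx.mul (hy.inv hb)

lemma sum {ι : Type*} {s : Finset ι} {f : ι → ℚ} {g : ι → ZMod p}
    (h : ∀ i ∈ s, ReducesTo (f i) (g i)) : ReducesTo (∑ i ∈ s, f i) (∑ i ∈ s, g i) := by
  classical
  induction s using Finset.induction_on with
  | empty => simpa using zero
  | insert i s hi ih =>
    rw [sum_insert hi, sum_insert hi]
    exact (h i (mem_insert_self i s)).add (ih fun j hj => h j (mem_insert_of_mem hj))

lemma prod {ι : Type*} {s : Finset ι} {f : ι → ℚ} {g : ι → ZMod p}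
    (h : ∀ i ∈ s, ReducesTo (f i) (g i)) : ReducesTo (∏ i ∈ s, f i) (∏ i ∈ s, g i) := by
  classical
  induction s using Finset.induction_on with
  | empty => simpa using one
  | insert i s hi ih =>
    rw [prod_insert hi, prod_insert hi]
    exact (h i (mem_insert_self i s)).mul (ih fun j hj => h j (mem_insert_of_mem hj))

lemma unique (hx : ReducesTo x a) (hx' : ReducesTo x b) : a = b :=
  hx.cast_eq.symm.trans hx'.cast_eq

lemma ne_zero (hx : ReducesTo x a) (ha : a ≠ 0) : x ≠ 0 := by
  rintro rfl
  exact ha (hx.unique zero)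

lemma isIntegralAt (hx : ReducesTo x a) : IsIntegralAt p x := ⟨a, hx⟩

lemma eq_mul_of_zero (hx : ReducesTo x (0 : ZMod p)) :
    ∃ c, IsIntegralAt p c ∧ x = p * c := by
  have h := hx.cast_eq
  rw [Rat.cast_def, div_eq_zero_iff, or_iff_left hx.den_ne_zero,
    ZMod.intCast_zmod_eq_zero_iff_dvd] at h
  obtain ⟨z, hz⟩ := h
  refine ⟨z / x.den, ((intCast z).div (natCast _) hx.den_ne_zero).isIntegralAt, ?_⟩
  rw [← mul_div_assoc]
  conv_lhs => rw [← Rat.num_div_den x, hz]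
  push_cast
  rfl

end ReducesTo

namespace IsIntegralAt

variable {x y : ℚ}

lemma not_dvd_den (h : IsIntegralAt p x) : ¬ p ∣ x.den := by
  obtain ⟨a, ha⟩ := h
  rw [← ZMod.natCast_eq_zero_iff]
  exact ha.den_ne_zero

lemma intCast (z : ℤ) : IsIntegralAt p z := (ReducesTo.intCast z).isIntegralAt

lemma natCast (n : ℕ) : IsIntegralAt p n := (ReducesTo.natCast n).isIntegralAt

lemma one : IsIntegralAt p 1 := ReducesTo.one.isIntegralAt

lemma add : IsIntegralAt p x → IsIntegralAt p y → IsIntegralAt p (x + y)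
  | ⟨_, hx⟩, ⟨_, hy⟩ => ⟨_, hx.add hy⟩

lemma sub : IsIntegralAt p x → IsIntegralAt p y → IsIntegralAt p (x - y)
  | ⟨_, hx⟩, ⟨_, hy⟩ => ⟨_, hx.sub hy⟩

lemma mul : IsIntegralAt p x → IsIntegralAt p y → IsIntegralAt p (x * y)
  | ⟨_, hx⟩, ⟨_, hy⟩ => ⟨_, hx.mul hy⟩

lemma pow (n : ℕ) : IsIntegralAt p x → IsIntegralAt p (x ^ n)
  | ⟨_, hx⟩ => ⟨_, hx.pow n⟩

lemma sum {ι : Type*} {s : Finset ι} {f : ι → ℚ} (h : ∀ i ∈ s, IsIntegralAt p (f i)) :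
    IsIntegralAt p (∑ i ∈ s, f i) := by
  have h' : ∀ i ∈ s, ReducesTo (f i) (f i : ZMod p) := fun i hi => by
    obtain ⟨a, ha⟩ := h i hi
    exact ⟨ha.den_ne_zero, rfl⟩
  exact ⟨_, ReducesTo.sum h'⟩

lemma prime_mul (h : IsIntegralAt p x) : ReducesTo (p * x) (0 : ZMod p) := by
  obtain ⟨a, ha⟩ := h
  simpa using ReducesTo.self.mul ha

end IsIntegralAt

end Reduction

lemma sum_range_two_mul_eq_sum_reflect {M : Type*} [AddCommMonoid M] (f : ℕ → M) (n : ℕ) :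
    ∑ j ∈ range (2 * n), f (j + 1) = ∑ i ∈ range n, (f (i + 1) + f (2 * n + 1 - (i + 1))) := by
  rw [two_mul, sum_range_add, sum_add_distrib, ← sum_range_reflect (fun i => f (n + i + 1))]
  refine congrArg _ (sum_congr rfl fun i hi => congrArg f ?_)
  rw [mem_range] at hi
  omega

lemma sum_range_two_mul_eq_sum_parity {M : Type*} [AddCommMonoid M] (f : ℕ → M) (n : ℕ) :
    ∑ j ∈ range (2 * n), f (j + 1) = ∑ i ∈ range n, (f (2 * i + 1) + f (2 * i + 2)) := by
  induction n with
  | zero => simp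
  | succ n ih =>
    rw [sum_range_succ, ← ih, show 2 * (n + 1) = 2 * n + 1 + 1 by ring, sum_range_succ,
      sum_range_succ, add_assoc]

lemma sum_range_two_mul_eq_sum_even {M : Type*} [AddCommMonoid M] (f : ℕ → M) (n : ℕ) :
    ∑ j ∈ range (2 * n), f (j + 1) =
      ∑ i ∈ range n, (f (2 * (i + 1)) + f (2 * n + 1 - 2 * (i + 1))) := by
  rw [sum_range_two_mul_eq_sum_parity, sum_add_distrib, add_comm, sum_add_distrib,
    ← sum_range_reflect (fun i => f (2 * i + 1))]
  refine congrArg _ (sum_congr rfl fun i hi => congrArg f ?_)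
  rw [mem_range] at hi
  omega

/-- `x` and `y` differ by `p ^ r` times a `p`-integral number. -/
def CongrAt (p : ℕ) [Fact p.Prime] (r : ℕ) (x y : ℚ) : Prop :=
  ∃ c, IsIntegralAt p c ∧ x = y + p ^ r * c

section PowerSums

variable {p : ℕ} [Fact p.Prime]

lemma CongrAt.sum {r : ℕ} {ι : Type*} {s : Finset ι} {f g : ι → ℚ}
    (h : ∀ i ∈ s, CongrAt p r (f i) (g i)) :
    CongrAt p r (∑ i ∈ s, f i) (∑ i ∈ s, g i) := by
  choose! c hc e using h
  refine ⟨∑ i ∈ s, c i, IsIntegralAt.sum hc, ?_⟩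
  rw [mul_sum, ← sum_add_distrib]
  exact sum_congr rfl e

lemma natCast_ne_zero_of_lt {k : ℕ} (hk : 0 < k) (hkp : k < p) : (k : ZMod p) ≠ 0 := by
  rw [Ne, ZMod.natCast_eq_zero_iff]
  exact Nat.not_dvd_of_pos_of_lt hk hkp

lemma reducesTo_inv_natCast {k : ℕ} (hk : 0 < k) (hkp : k < p) :
    ReducesTo (k : ℚ)⁻¹ (k : ZMod p)⁻¹ :=
  (ReducesTo.natCast k).inv (natCast_ne_zero_of_lt hk hkp)

lemma isIntegralAt_bernoulli {n : ℕ} (hn : n + 1 < p) : IsIntegralAt p (bernoulli n) := by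
  have h : IsIntegralAt p (bernoulli' n) := by
    induction n using Nat.strong_induction_on with
    | _ n ih =>
      rw [bernoulli'_def]
      refine IsIntegralAt.one.sub (IsIntegralAt.sum fun k hk => ?_)
      rw [mem_range] at hk
      refine IsIntegralAt.mul ?_ (ih k hk (by omega))
      have := (reducesTo_inv_natCast (p := p) (k := n - k + 1) (by omega) (by omega)).isIntegralAt
      rw [Nat.cast_add_one, Nat.cast_sub hk.le] at this
      rw [div_eq_mul_inv]
      exact (IsIntegralAt.natCast _).mul this
  rw [bernoulli]
  exact IsIntegralAt.mul (by simpa using IsIntegralAt.intCast (p := p) ((-1) ^ n)) h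

lemma congrAt_inv_sq_sub {a : ℕ} (ha : 0 < a) (hap : a < p) :
    CongrAt p 2 ((((p - a : ℕ) : ℚ) ^ 2)⁻¹) (((a : ℚ) ^ 2)⁻¹ + 2 * p * ((a : ℚ) ^ 3)⁻¹) := by
  have h₁ := (reducesTo_inv_natCast ha hap).isIntegralAt
  have h₂ := (reducesTo_inv_natCast (p := p) (k := p - a) (by omega) (by omega)).isIntegralAt
  have e₁ : (a : ℚ) ≠ 0 := by positivity
  have e₂ : (p : ℚ) - a ≠ 0 := sub_ne_zero.mpr (by exact_mod_cast hap.ne')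
  rw [Nat.cast_sub hap.le] at h₂ ⊢
  have h₃ : IsIntegralAt p ((3 * a - 2 * p : ℤ) : ℚ) := IsIntegralAt.intCast _
  refine ⟨_, h₃.mul ((h₁.pow 3).mul (h₂.pow 2)), ?_⟩
  push_cast
  field_simp
  ring

lemma congrAt_pow_sub {a m : ℕ} (hap : a < p) (hm : Even m) (hm₀ : m ≠ 0) :
    CongrAt p 2 (((p - a : ℕ) : ℚ) ^ m) ((a : ℚ) ^ m - m * (a : ℚ) ^ (m - 1) * p) := by
  obtain ⟨c, hc⟩ := Polynomial.powAddExpansion (-(a : ℤ)) (p : ℤ) m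
  refine ⟨c, IsIntegralAt.intCast c, ?_⟩
  have hc' := congrArg (fun z : ℤ => (z : ℚ)) hc
  push_cast at hc'
  have hodd : Odd (m - 1) := Nat.Even.sub_odd (by omega) hm odd_one
  rw [hm.neg_pow, hodd.neg_pow] at hc'
  rw [Nat.cast_sub hap.le, sub_eq_neg_add, hc']
  ring

lemma congrAt_sum_inv_sq {n : ℕ} (hn : p = 2 * n + 1) (hp : 3 < p) :
    ∃ h, ReducesTo h (-(7 / 6) * ∑ i ∈ range n, (((i + 1 : ℕ) : ZMod p) ^ 3)⁻¹) ∧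
      ∑ i ∈ range n, (((i + 1 : ℕ) : ℚ) ^ 2)⁻¹ = p * h := by
  set X : ℚ := ∑ i ∈ range n, (((i + 1 : ℕ) : ℚ) ^ 2)⁻¹ with hX
  set Z : ℚ := ∑ i ∈ range n, (((i + 1 : ℕ) : ℚ) ^ 3)⁻¹ with hZ
  have hZr : ReducesTo Z (∑ i ∈ range n, (((i + 1 : ℕ) : ZMod p) ^ 3)⁻¹) := by
    refine ReducesTo.sum fun i hi => ?_
    rw [mem_range] at hi
    simp only [← inv_pow]
    exact (reducesTo_inv_natCast (by omega) (by omega)).pow 3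
  obtain ⟨c₁, hc₁, e₁⟩ : CongrAt p 2 (∑ j ∈ range (2 * n), (((j + 1 : ℕ) : ℚ) ^ 2)⁻¹)
      (2 * X + 2 * p * Z) := by
    rw [sum_range_two_mul_eq_sum_reflect (fun j => ((j : ℚ) ^ 2)⁻¹), hX, hZ, mul_sum, mul_sum,
      ← sum_add_distrib, ← hn]
    refine CongrAt.sum fun i hi => ?_
    rw [mem_range] at hi
    obtain ⟨c, hc, e⟩ := congrAt_inv_sq_sub (p := p) (a := i + 1) (by omega) (by omega)
    exact ⟨c, hc, by rw [e]; ring⟩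
  obtain ⟨c₂, hc₂, e₂⟩ : CongrAt p 2 (∑ j ∈ range (2 * n), (((j + 1 : ℕ) : ℚ) ^ 2)⁻¹)
      (1 / 2 * X + 1 / 4 * p * Z) := by
    rw [sum_range_two_mul_eq_sum_even (fun j => ((j : ℚ) ^ 2)⁻¹), hX, hZ, mul_sum, mul_sum,
      ← sum_add_distrib, ← hn]
    refine CongrAt.sum fun i hi => ?_
    rw [mem_range] at hi
    obtain ⟨c, hc, e⟩ := congrAt_inv_sq_sub (p := p) (a := 2 * (i + 1)) (by omega) (by omega)
    refine ⟨c, hc, ?_⟩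
    rw [e, Nat.cast_mul]
    field_simp
    ring
  have h2 : (2 : ZMod p) ≠ 0 := by
    simpa using natCast_ne_zero_of_lt (p := p) (k := 2) (by omega) (by omega)
  have h3 : (3 : ZMod p) ≠ 0 := by
    simpa using natCast_ne_zero_of_lt (p := p) (k := 3) (by omega) (by omega)
  have h6 : (6 : ZMod p) ≠ 0 := by
    rw [show (6 : ZMod p) = 2 * 3 by norm_num]; exact mul_ne_zero h2 h3
  have hr : ReducesTo (2 / 3 * (c₂ - c₁)) (_ : ZMod p) :=
    ((ReducesTo.ofNat 2).div (ReducesTo.ofNat 3) h3).mul (hc₂.sub hc₁).choose_spec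
  refine ⟨-(7 / 6) * Z + p * (2 / 3 * (c₂ - c₁)), ?_, by linear_combination 2 / 3 * (e₂ - e₁)⟩
  have := ((((ReducesTo.ofNat 7).div (ReducesTo.ofNat 6) h6).neg).mul hZr).add
    hr.isIntegralAt.prime_mul
  rwa [add_zero] at this

lemma congrAt_sum_pow {m : ℕ} (hm : m + 2 < p) (hm₀ : m ≠ 0) :
    CongrAt p 2 (∑ j ∈ range p, (j : ℚ) ^ m) (p * bernoulli m) := by
  have h1 : ((m : ℚ) + 1) ≠ 0 := by positivity
  rw [sum_range_pow, sum_range_succ]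
  obtain ⟨c, hc, e⟩ : CongrAt p 2 (∑ i ∈ range m,
      bernoulli i * ((m + 1).choose i) * (p : ℚ) ^ (m + 1 - i) / (m + 1)) (∑ i ∈ range m, 0) := by
    refine CongrAt.sum fun i hi => ?_
    rw [mem_range] at hi
    refine ⟨bernoulli i * ((m + 1).choose i) * (p : ℚ) ^ (m - 1 - i) * ((m + 1 : ℕ) : ℚ)⁻¹,
      (((isIntegralAt_bernoulli (by omega)).mul (.natCast _)).mul
        ((IsIntegralAt.natCast p).pow _)).mul
        (reducesTo_inv_natCast (by omega) (by omega)).isIntegralAt, ?_⟩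
    rw [show m + 1 - i = 2 + (m - 1 - i) by omega, pow_add]
    push_cast
    ring
  refine ⟨c, hc, ?_⟩
  rw [e, sum_const_zero, Nat.choose_succ_self_right, Nat.add_sub_cancel_left]
  push_cast
  field_simp
  ring

lemma sum_inv_cube_eq_bernoulli {n : ℕ} (hn : p = 2 * n + 1) (hp : 3 < p) :
    ∑ i ∈ range n, (((i + 1 : ℕ) : ZMod p) ^ 3)⁻¹ = -2 * (bernoulli (p - 3) : ZMod p) := by
  obtain ⟨m, hm⟩ : ∃ m, p = m + 4 := ⟨p - 4, by omega⟩
  have hB : ReducesTo (bernoulli (p - 3)) (bernoulli (p - 3) : ZMod p) := by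
    obtain ⟨a, ha⟩ := isIntegralAt_bernoulli (p := p) (n := p - 3) (by omega)
    exact ⟨ha.den_ne_zero, rfl⟩
  have hp3 : p - 3 = m + 1 := by omega
  rw [hp3] at hB ⊢
  have hev : Even (m + 1) := ⟨n - 1, by omega⟩
  have hpz : (p : ℚ) ≠ 0 := by rw [hn]; positivity
  have h2 : (2 : ZMod p) ≠ 0 := by
    simpa using natCast_ne_zero_of_lt (p := p) (k := 2) (by omega) (by omega)
  have h3 : (3 : ZMod p) ≠ 0 := by
    simpa using natCast_ne_zero_of_lt (p := p) (k := 3) (by omega) (by omega)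
  have hpow : ∀ x : ZMod p, x ≠ 0 → x ^ m = (x ^ 3)⁻¹ := fun x hx => by
    refine eq_inv_of_mul_eq_one_left ?_
    rw [← pow_add, ← ZMod.pow_card_sub_one_eq_one hx]
    congr 1
    omega
  set X : ℚ := ∑ i ∈ range n, ((i + 1 : ℕ) : ℚ) ^ (m + 1) with hX
  set Z : ℚ := ∑ i ∈ range n, ((i + 1 : ℕ) : ℚ) ^ m with hZ
  have hZr : ReducesTo Z (∑ i ∈ range n, (((i + 1 : ℕ) : ZMod p) ^ 3)⁻¹) := by
    refine ReducesTo.sum fun i hi => ?_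
    rw [mem_range] at hi
    rw [← hpow _ (natCast_ne_zero_of_lt (by omega) (by omega))]
    exact (ReducesTo.natCast _).pow m
  have hsum : ∑ j ∈ range p, (j : ℚ) ^ (m + 1) =
      ∑ j ∈ range (2 * n), ((j + 1 : ℕ) : ℚ) ^ (m + 1) := by
    rw [hn, sum_range_succ']
    simp
  obtain ⟨c₁, hc₁, e₁⟩ : CongrAt p 2 (∑ j ∈ range p, (j : ℚ) ^ (m + 1))
      (2 * X + -((m + 1) * p) * Z) := by
    rw [hsum, sum_range_two_mul_eq_sum_reflect (fun j => (j : ℚ) ^ (m + 1)), hX, hZ, mul_sum,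
      mul_sum, ← sum_add_distrib, ← hn]
    refine CongrAt.sum fun i hi => ?_
    rw [mem_range] at hi
    obtain ⟨c, hc, e⟩ := congrAt_pow_sub (p := p) (a := i + 1) (by omega) hev (by omega)
    refine ⟨c, hc, ?_⟩
    rw [e, Nat.add_sub_cancel]
    push_cast
    ring
  obtain ⟨c₂, hc₂, e₂⟩ : CongrAt p 2 (∑ j ∈ range p, (j : ℚ) ^ (m + 1))
      (2 * 2 ^ (m + 1) * X + -((m + 1) * p * 2 ^ m) * Z) := by
    rw [hsum, sum_range_two_mul_eq_sum_even (fun j => (j : ℚ) ^ (m + 1)), hX, hZ, mul_sum,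
      mul_sum, ← sum_add_distrib, ← hn]
    refine CongrAt.sum fun i hi => ?_
    rw [mem_range] at hi
    obtain ⟨c, hc, e⟩ := congrAt_pow_sub (p := p) (a := 2 * (i + 1)) (by omega) hev (by omega)
    refine ⟨c, hc, ?_⟩
    rw [e, Nat.add_sub_cancel, Nat.cast_mul, mul_pow, mul_pow]
    push_cast
    ring
  obtain ⟨c₃, hc₃, e₃⟩ := congrAt_sum_pow (p := p) (m := m + 1) (by omega) (by omega)
  have e : (2 ^ (m + 1) - 1) * bernoulli (m + 1) + (m + 1 : ℕ) * 2 ^ m * Z =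
      p * (2 ^ (m + 1) * c₁ - c₂ - (2 ^ (m + 1) - 1) * c₃) := by
    apply mul_left_cancel₀ hpz
    push_cast
    linear_combination 2 ^ (m + 1) * e₁ - e₂ - (2 ^ (m + 1) - 1) * e₃
  have hpw : ∀ k, ReducesTo ((2 : ℚ) ^ k) ((2 : ZMod p) ^ k) := fun k => (ReducesTo.ofNat 2).pow k
  have r₁ := ((((hpw (m + 1)).sub .one).mul hB).add (((ReducesTo.natCast (m + 1)).mul
    (hpw m)).mul hZr))
  have i₁ := (hpw (m + 1)).isIntegralAt
  have r₂ := (((i₁.mul hc₁).sub hc₂).sub ((i₁.sub .one).mul hc₃)).prime_mul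
  rw [← e] at r₂
  have key := r₁.unique r₂
  have hm4 : ((m + 1 : ℕ) : ZMod p) = -3 := by
    have : ((m + 4 : ℕ) : ZMod p) = 0 := by rw [← hm]; simp
    push_cast at this ⊢
    linear_combination this
  rw [hm4, pow_succ, hpow 2 h2] at key
  generalize ∑ i ∈ range n, (((i + 1 : ℕ) : ZMod p) ^ 3)⁻¹ = w at key ⊢
  apply mul_left_cancel₀ h3
  field_simp at key
  linear_combination -key

end PowerSums

/-- The sequence `φ` with `φ 0 = 0`, `φ 1 = 1` and `φ (m + 2) = φ m + 1 / (2m + 3)`. -/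
def skipHarmonic (K : Type*) [Field K] : ℕ → K
  | 0 => 0
  | 1 => 1
  | m + 2 => skipHarmonic K m + (2 * m + 3 : K)⁻¹

section FiniteFieldSums

variable {p : ℕ} [Fact p.Prime]

lemma sum_range_natCast_zmod {M : Type*} [AddCommMonoid M] (f : ZMod p → M) :
    ∑ i ∈ range p, f i = ∑ c, f c :=
  sum_nbij' (fun i => (i : ZMod p)) ZMod.val (fun _ _ => mem_univ _)
    (fun c _ => mem_range.mpr c.val_lt) (fun _ hi => ZMod.val_cast_of_lt (mem_range.mp hi))
    (fun c _ => ZMod.natCast_zmod_val c) (fun _ _ => rfl)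

lemma zmod_sum_pow_of_lt {k : ℕ} (hk : k < p - 1) : ∑ c : ZMod p, c ^ k = 0 :=
  FiniteField.sum_pow_lt_card_sub_one _ k (by rwa [ZMod.card])

lemma zmod_sum_pow_card_sub_one : ∑ c : ZMod p, c ^ (p - 1) = -1 := by
  have hp := (Fact.out : p.Prime).two_le
  rw [← add_sum_erase _ _ (mem_univ (0 : ZMod p)), zero_pow (by omega),
    sum_congr rfl fun c hc => ZMod.pow_card_sub_one_eq_one (ne_of_mem_erase hc), sum_const,
    card_erase_of_mem (mem_univ _), card_univ, ZMod.card, nsmul_one, Nat.cast_sub (by omega)]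
  simp

lemma zmod_sum_pow_eq_zero {k : ℕ} (hk : p - 1 < k) (hk' : k < 2 * (p - 1)) :
    ∑ c : ZMod p, c ^ k = 0 := by
  rw [← zmod_sum_pow_of_lt (p := p) (k := k - (p - 1)) (by omega)]
  refine sum_congr rfl fun c _ => ?_
  rcases eq_or_ne c 0 with rfl | hc
  · rw [zero_pow (by omega), zero_pow (by omega)]
  · conv_lhs => rw [show k = p - 1 + (k - (p - 1)) by omega, pow_add,
      ZMod.pow_card_sub_one_eq_one hc, one_mul]

lemma zmod_pow_sub_two (hp : 2 < p) (x : ZMod p) : x ^ (p - 2) = x⁻¹ := by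
  rcases eq_or_ne x 0 with rfl | hx
  · rw [zero_pow (by omega), inv_zero]
  · refine eq_inv_of_mul_eq_one_left ?_
    rw [← pow_succ, ← ZMod.pow_card_sub_one_eq_one hx]
    congr 1
    omega

lemma zmod_pow_sub_three (hp : 3 < p) (x : ZMod p) : x ^ (p - 3) = (x ^ 2)⁻¹ := by
  rcases eq_or_ne x 0 with rfl | hx
  · rw [zero_pow (by omega), zero_pow two_ne_zero, inv_zero]
  · refine eq_inv_of_mul_eq_one_left ?_
    rw [← pow_add, ← ZMod.pow_card_sub_one_eq_one hx]
    congr 1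
    omega

/-- The sum of the inverses of `2, 6, …, 4n - 2` modulo `p`. -/
def evenHarmonic (p n : ℕ) : ZMod p := ∑ i ∈ range n, (4 * (i : ZMod p) + 2) ^ (p - 2)

lemma evenHarmonic_succ (n : ℕ) :
    evenHarmonic p (n + 1) = evenHarmonic p n + (4 * (n : ZMod p) + 2) ^ (p - 2) :=
  sum_range_succ _ _

lemma evenHarmonic_periodic (hp : 3 < p) : Function.Periodic (evenHarmonic p) p := by
  have h2 : (2 : ZMod p) ≠ 0 := by
    simpa using natCast_ne_zero_of_lt (p := p) (k := 2) (by omega) (by omega)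
  have h4 : (4 : ZMod p) ≠ 0 := by
    rw [show (4 : ZMod p) = 2 * 2 by norm_num]; exact mul_ne_zero h2 h2
  intro n
  induction n with
  | zero =>
    rw [zero_add, evenHarmonic, sum_range_natCast_zmod (fun c => (4 * c + 2) ^ (p - 2))]
    simp only [evenHarmonic, range_zero, sum_empty]
    rw [← zmod_sum_pow_of_lt (p := p) (k := p - 2) (by omega)]
    exact Fintype.sum_equiv ((Equiv.mulLeft₀ (4 : ZMod p) h4).trans (Equiv.addRight 2)) _ _
      fun c => rfl
  | succ n ih =>
    rw [add_right_comm, evenHarmonic_succ, ih, evenHarmonic_succ]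
    simp

/-- `evenHarmonic` as a function on residues modulo `p`. -/
def evenHarmonicMod (p : ℕ) (c : ZMod p) : ZMod p := evenHarmonic p c.val

lemma evenHarmonicMod_natCast (hp : 3 < p) (n : ℕ) :
    evenHarmonicMod p n = evenHarmonic p n := by
  rw [evenHarmonicMod, ZMod.val_natCast]
  exact (evenHarmonic_periodic hp).map_mod_nat n

lemma evenHarmonicMod_add_one (hp : 3 < p) (c : ZMod p) :
    evenHarmonicMod p (c + 1) = evenHarmonicMod p c + (4 * c + 2)⁻¹ := by
  obtain ⟨n, rfl⟩ : ∃ n : ℕ, (n : ZMod p) = c := ⟨c.val, ZMod.natCast_zmod_val c⟩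
  rw [← Nat.cast_add_one, evenHarmonicMod_natCast hp, evenHarmonicMod_natCast hp,
    evenHarmonic_succ, zmod_pow_sub_two (by omega)]

lemma evenHarmonicMod_neg (hp : 3 < p) (c : ZMod p) :
    evenHarmonicMod p (-c) = evenHarmonicMod p c := by
  obtain ⟨n, rfl⟩ : ∃ n : ℕ, (n : ZMod p) = c := ⟨c.val, ZMod.natCast_zmod_val c⟩
  induction n with
  | zero => simp
  | succ n ih =>
    have h := evenHarmonicMod_add_one hp (-((n + 1 : ℕ) : ZMod p))
    rw [show -((n + 1 : ℕ) : ZMod p) + 1 = -n by push_cast; ring, ih,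
      show 4 * -((n + 1 : ℕ) : ZMod p) + 2 = -(4 * n + 2) by push_cast; ring, inv_neg] at h
    rw [Nat.cast_add_one, evenHarmonicMod_add_one hp, ← Nat.cast_add_one]
    linear_combination -h

lemma skipHarmonic_eq_sub (hp : 3 < p) (m : ℕ) :
    skipHarmonic (ZMod p) m =
      evenHarmonicMod p ((2 * m + 1) / 4) - evenHarmonicMod p (1 / 4) := by
  have h2 : (2 : ZMod p) ≠ 0 := by
    simpa using natCast_ne_zero_of_lt (p := p) (k := 2) (by omega) (by omega)
  have h4 : (4 : ZMod p) ≠ 0 := by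
    rw [show (4 : ZMod p) = 2 * 2 by norm_num]; exact mul_ne_zero h2 h2
  induction m using Nat.twoStepInduction with
  | zero => simp [skipHarmonic]
  | one =>
    have h := evenHarmonicMod_add_one hp (-(1 / 4))
    rw [evenHarmonicMod_neg hp, show -(1 / 4 : ZMod p) + 1 = (2 * (1 : ℕ) + 1) / 4 by
      field_simp; push_cast; ring, show 4 * -(1 / 4 : ZMod p) + 2 = 1 by field_simp; ring,
      inv_one] at h
    rw [h, skipHarmonic]
    ring
  | more m ih _ =>
    have h := evenHarmonicMod_add_one hp ((2 * m + 1) / 4)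
    rw [show 4 * ((2 * (m : ZMod p) + 1) / 4) + 2 = 2 * m + 3 by field_simp; ring] at h
    rw [skipHarmonic, ih, show (2 * ((m + 2 : ℕ) : ZMod p) + 1) / 4 = (2 * m + 1) / 4 + 1 by
      field_simp; push_cast; ring, h]
    ring

lemma zmod_faulhaber (hp : 3 < p) (n : ℕ) :
    ∑ k ∈ range n, (k : ZMod p) ^ (p - 2) =
      ∑ i ∈ range (p - 1), (bernoulli i : ZMod p) * ((p - 1).choose i) * (n : ZMod p) ^ (p - 1 - i)
        / (p - 1 : ℕ) := by
  have h₁ : ReducesTo (∑ k ∈ range n, (k : ℚ) ^ (p - 2)) (∑ k ∈ range n, (k : ZMod p) ^ (p - 2)) :=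
    ReducesTo.sum fun k _ => (ReducesTo.natCast k).pow _
  rw [sum_range_pow, show p - 2 + 1 = p - 1 by omega] at h₁
  refine h₁.unique (ReducesTo.sum fun i hi => ?_)
  rw [mem_range] at hi
  have hB : ReducesTo (bernoulli i) (bernoulli i : ZMod p) := by
    obtain ⟨a, ha⟩ := isIntegralAt_bernoulli (p := p) (n := i) (by omega)
    exact ⟨ha.den_ne_zero, rfl⟩
  have e : ((p - 2 : ℕ) : ℚ) + 1 = (p - 1 : ℕ) := by
    rw [← Nat.cast_add_one]; congr 1; omega
  rw [e]
  exact ((hB.mul (.natCast _)).mul ((ReducesTo.natCast n).pow _)).div (.natCast _)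
    (natCast_ne_zero_of_lt (by omega) (by omega))

lemma evenHarmonic_eq (n : ℕ) :
    evenHarmonic p n = 2 ^ (p - 2) * (∑ k ∈ range (2 * n), (k : ZMod p) ^ (p - 2) -
      2 ^ (p - 2) * ∑ k ∈ range n, (k : ZMod p) ^ (p - 2)) := by
  have h : ∑ k ∈ range (2 * n), (k : ZMod p) ^ (p - 2) =
      ∑ i ∈ range n, ((2 * (i : ZMod p)) ^ (p - 2) + (2 * (i : ZMod p) + 1) ^ (p - 2)) := by
    induction n with
    | zero => simp
    | succ n ih =>
      rw [sum_range_succ, ← ih, show 2 * (n + 1) = 2 * n + 1 + 1 by ring, sum_range_succ,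
        sum_range_succ]
      push_cast
      ring
  rw [h, mul_sum, ← sum_sub_distrib, mul_sum, evenHarmonic]
  refine sum_congr rfl fun i _ => ?_
  rw [mul_pow, add_sub_cancel_left, ← mul_pow]
  congr 1
  ring

lemma sum_evenHarmonic_mul_pow (hp : 3 < p) :
    ∑ n ∈ range p, evenHarmonic p n * (n : ZMod p) ^ (p - 3) =
      7 / 4 * (bernoulli (p - 3) : ZMod p) := by
  have h2 : (2 : ZMod p) ≠ 0 := by
    simpa using natCast_ne_zero_of_lt (p := p) (k := 2) (by omega) (by omega)
  have hpm : ((p - 1 : ℕ) : ZMod p) ≠ 0 := natCast_ne_zero_of_lt (by omega) (by omega)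
  have hterm : ∀ n : ℕ, evenHarmonic p n * (n : ZMod p) ^ (p - 3) = ∑ i ∈ range (p - 1),
      2⁻¹ * ((bernoulli i : ZMod p) * ((p - 1).choose i) / (p - 1 : ℕ)) *
        (2 ^ (p - 1 - i) - 2⁻¹) * (n : ZMod p) ^ (p - 1 - i + (p - 3)) := fun n => by
    rw [evenHarmonic_eq, zmod_faulhaber hp, zmod_faulhaber hp, zmod_pow_sub_two (by omega),
      mul_sum, ← sum_sub_distrib, mul_sum, sum_mul]
    refine sum_congr rfl fun i _ => ?_
    rw [pow_add]
    push_cast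
    rw [mul_pow]
    ring
  rw [sum_congr rfl fun n _ => hterm n, sum_comm, sum_eq_single_of_mem (p - 3)
    (mem_range.mpr (by omega))]
  · rw [← mul_sum, sum_range_natCast_zmod (fun c => c ^ (p - 1 - (p - 3) + (p - 3))),
      show p - 1 - (p - 3) + (p - 3) = p - 1 by omega, zmod_sum_pow_card_sub_one,
      show p - 1 - (p - 3) = 2 by omega]
    have hc : (((p - 1).choose (p - 3) : ℕ) : ZMod p) * 2 = (p - 1 : ℕ) * (p - 2 : ℕ) := by
      have : (p - 1).choose (p - 3) * 2 = (p - 1) * (p - 2) := by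
        rw [← Nat.choose_symm (by omega), show p - 1 - (p - 3) = 2 by omega, Nat.choose_two_right,
          Nat.div_mul_cancel (Nat.even_mul_pred_self _).two_dvd]
        rfl
      exact_mod_cast congrArg (Nat.cast : ℕ → ZMod p) this
    have hp2 : ((p - 2 : ℕ) : ZMod p) = -2 := by
      rw [Nat.cast_sub (by omega)]; simp
    rw [hp2] at hc
    have hc' : (((p - 1).choose (p - 3) : ℕ) : ZMod p) = -(p - 1 : ℕ) := by
      apply mul_right_cancel₀ h2; rw [hc]; ring
    rw [hc', show (4 : ZMod p) = 2 * 2 by norm_num]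
    field_simp
    ring
  · intro i hi hne
    rw [mem_range] at hi
    rw [← mul_sum, sum_range_natCast_zmod (fun c => c ^ (p - 1 - i + (p - 3)))]
    rcases lt_or_gt_of_ne hne with h | h
    · rw [zmod_sum_pow_eq_zero (by omega) (by omega), mul_zero]
    · rw [zmod_sum_pow_of_lt (by omega), mul_zero]

lemma sum_eq_two_mul_sum_odd {n : ℕ} (hn : p = 2 * n + 1) (g : ZMod p → ZMod p) (h₀ : g 0 = 0)
    (hg : ∀ c, g (-c) = g c) : ∑ c, g c = 2 * ∑ m ∈ range n, g (2 * m + 1) := by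
  have h : ∑ i ∈ range p, g i = ∑ j ∈ range (2 * n), g ((j + 1 : ℕ) : ZMod p) := by
    rw [show range p = range (2 * n + 1) from congrArg range hn, sum_range_succ']
    simp [h₀]
  rw [← sum_range_natCast_zmod, h, sum_range_two_mul_eq_sum_parity (fun j => g (j : ZMod p)),
    sum_add_distrib, two_mul, ← sum_range_reflect (fun i => g ((2 * i + 2 : ℕ) : ZMod p))]
  congr 1
  · exact sum_congr rfl fun i _ => by push_cast; rfl
  · refine sum_congr rfl fun i hi => ?_
    rw [mem_range] at hi
    rw [← hg, show 2 * (n - 1 - i) + 2 = p - (2 * i + 1) by omega, Nat.cast_sub (by omega)]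
    push_cast
    rw [ZMod.natCast_self, zero_sub, neg_neg]

lemma sum_skipHarmonic {n : ℕ} (hn : p = 2 * n + 1) (hp : 3 < p) :
    ∑ m ∈ range n, (skipHarmonic (ZMod p) m - skipHarmonic (ZMod p) n) *
      ((2 * (m : ZMod p) + 1) ^ 2)⁻¹ = 7 / 128 * (bernoulli (p - 3) : ZMod p) := by
  have h2 : (2 : ZMod p) ≠ 0 := by
    simpa using natCast_ne_zero_of_lt (p := p) (k := 2) (by omega) (by omega)
  have h4 : (4 : ZMod p) ≠ 0 := by
    rw [show (4 : ZMod p) = 2 * 2 by norm_num]; exact mul_ne_zero h2 h2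
  have hpn : 2 * (n : ZMod p) + 1 = 0 := by
    have : ((2 * n + 1 : ℕ) : ZMod p) = 0 := by rw [← hn]; simp
    push_cast at this
    exact this
  have hev : Even (p - 3) := ⟨n - 1, by omega⟩
  have hsum := sum_eq_two_mul_sum_odd hn (fun c => evenHarmonicMod p (c / 4) * c ^ (p - 3))
    (by rw [zero_pow (by omega), mul_zero])
    (fun c => by rw [neg_div, evenHarmonicMod_neg hp, hev.neg_pow])
  have hsub : ∑ c : ZMod p, evenHarmonicMod p (c / 4) * c ^ (p - 3) =
      ∑ c : ZMod p, evenHarmonicMod p c * (4 * c) ^ (p - 3) :=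
    (Fintype.sum_equiv (Equiv.mulLeft₀ (4 : ZMod p) h4) _ _ fun c => by
      simp [mul_div_cancel_left₀ c h4]).symm
  have hcast : ∑ c : ZMod p, evenHarmonicMod p c * (4 * c) ^ (p - 3) =
      (4 ^ 2)⁻¹ * ∑ i ∈ range p, evenHarmonic p i * (i : ZMod p) ^ (p - 3) := by
    rw [← sum_range_natCast_zmod, mul_sum]
    refine sum_congr rfl fun i _ => ?_
    rw [evenHarmonicMod_natCast hp, mul_pow, zmod_pow_sub_three hp 4]
    ring
  rw [hsub, hcast, sum_evenHarmonic_mul_pow hp] at hsum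
  have hgoal : ∑ m ∈ range n, (skipHarmonic (ZMod p) m - skipHarmonic (ZMod p) n) *
      ((2 * (m : ZMod p) + 1) ^ 2)⁻¹ =
        ∑ m ∈ range n, evenHarmonicMod p ((2 * m + 1) / 4) * (2 * (m : ZMod p) + 1) ^ (p - 3) := by
    refine sum_congr rfl fun m _ => ?_
    rw [skipHarmonic_eq_sub hp, skipHarmonic_eq_sub hp, hpn, zmod_pow_sub_three hp,
      show evenHarmonicMod p (0 / 4) = 0 by simp [evenHarmonicMod, evenHarmonic]]
    ring
  rw [hgoal]
  apply mul_left_cancel₀ h2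
  rw [← hsum, show (4 : ZMod p) = 2 ^ 2 by norm_num, show (128 : ZMod p) = 2 ^ 7 by norm_num]
  field_simp

end FiniteFieldSums

section Expansion

variable {p : ℕ} [Fact p.Prime]

lemma ratioSeq_expansion {n m : ℕ} (hn : p = 2 * n + 1) (hp : 3 < p) (hm : m ≤ n) :
    ∃ a, ReducesTo a (4 * skipHarmonic (ZMod p) m) ∧ ratioSeq (2 * p) m = 1 + p * a := by
  have step : ∀ w : ℕ, Odd w → w < p → ∃ b, ReducesTo b (4 * (w : ZMod p)⁻¹) ∧
      ((w : ℚ) + 2 * p) / (w - 2 * p) = 1 + p * b := by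
    intro w hw hwp
    have hw₀ : (w : ZMod p) ≠ 0 := natCast_ne_zero_of_lt hw.pos hwp
    have h := (ReducesTo.natCast w).sub ((ReducesTo.ofNat 2).mul (ReducesTo.self (p := p)))
    rw [mul_zero, sub_zero] at h
    have hne := h.ne_zero hw₀
    refine ⟨4 * ((w : ℚ) - 2 * p)⁻¹, (ReducesTo.ofNat 4).mul (h.inv hw₀), ?_⟩
    field_simp
    ring
  induction m using Nat.twoStepInduction with
  | zero => exact ⟨0, by simpa [skipHarmonic] using ReducesTo.zero, by simp [ratioSeq]⟩
  | one =>
    obtain ⟨b, hb, e⟩ := step 1 odd_one (by omega)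
    refine ⟨b, ?_, ?_⟩
    · simpa [skipHarmonic] using hb
    · rw [ratioSeq, ← e, Nat.cast_one]
  | more m ih _ =>
    obtain ⟨a, ha, e⟩ := ih (by omega)
    obtain ⟨b, hb, e'⟩ := step (2 * m + 3) ⟨m + 1, by ring⟩ (by omega)
    refine ⟨a + b + p * (a * b), ?_, ?_⟩
    · have := (ha.add hb).add (ha.mul hb).isIntegralAt.prime_mul
      rw [skipHarmonic, mul_add]
      push_cast at this
      rwa [add_zero] at this
    · push_cast at e'
      rw [ratioSeq, e, e']
      ring

lemma zmod_odd_sq_sub_odd_sq_ne_zero {n j m : ℕ} (hn : p = 2 * n + 1) (hj : j < n) (hm : m < n)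
    (h : j ≠ m) : (2 * (j : ZMod p) + 1) ^ 2 - (2 * (m : ZMod p) + 1) ^ 2 ≠ 0 := by
  have h2 : (2 : ZMod p) ≠ 0 := by
    simpa using natCast_ne_zero_of_lt (p := p) (k := 2) (by omega) (by omega)
  have h₁ : ((j + m + 1 : ℕ) : ZMod p) ≠ 0 := natCast_ne_zero_of_lt (by omega) (by omega)
  have h₂ : (j : ZMod p) - m ≠ 0 := by
    refine sub_ne_zero.mpr fun e => h ?_
    rwa [ZMod.natCast_eq_natCast_iff', Nat.mod_eq_of_lt (by omega),
      Nat.mod_eq_of_lt (by omega)] at e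
  push_cast at h₁
  rw [show (2 * (j : ZMod p) + 1) ^ 2 - (2 * (m : ZMod p) + 1) ^ 2 =
    2 * 2 * (j - m) * (j + m + 1) by ring]
  exact mul_ne_zero (mul_ne_zero (mul_ne_zero h2 h2) h₂) h₁

lemma zmod_odd_ne_zero {n j : ℕ} (hn : p = 2 * n + 1) (hj : j < n) :
    (2 * (j : ZMod p) + 1) ≠ 0 := by
  have := natCast_ne_zero_of_lt (p := p) (k := 2 * j + 1) (by omega) (by omega)
  push_cast at this
  exact this

lemma zmod_prod_erase {n m : ℕ} (hn : p = 2 * n + 1) (hm : m < n) :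
    ∏ j ∈ (range n).erase m, (2 * (j : ZMod p) + 1) ^ 2 /
      ((2 * (j : ZMod p) + 1) ^ 2 - (2 * (m : ZMod p) + 1) ^ 2) = -2 := by
  set v : ℕ → ZMod p := fun j => (2 * (j : ZMod p) + 1) ^ 2 with hv
  have hpn : 2 * (n : ZMod p) + 1 = 0 := by
    have : ((2 * n + 1 : ℕ) : ZMod p) = 0 := by rw [← hn]; simp
    push_cast at this
    exact this
  have hne : ∀ j < n, v j ≠ 0 := fun j hj => pow_ne_zero 2 (zmod_odd_ne_zero hn hj)
  have hone : ∀ j < n, v j ^ n = 1 := fun j hj => by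
    have h := ZMod.pow_card_sub_one_eq_one (zmod_odd_ne_zero hn hj)
    rwa [show p - 1 = 2 * n by omega, pow_mul] at h
  have hinj : Set.InjOn v (range n) := fun i hi j hj e => by_contra fun h =>
    zmod_odd_sq_sub_odd_sq_ne_zero hn (mem_range.mp hi) (mem_range.mp hj) h (sub_eq_zero.mpr e)
  have hmem := mem_range.mpr hm
  have hbasis : Lagrange.basis (range n) v m = Polynomial.C (-2) *
      ∑ k ∈ range n, (Polynomial.C (v m)⁻¹ * Polynomial.X) ^ k := by
    refine Polynomial.eq_of_degrees_lt_of_eval_index_eq (range n) hinj ?_ ?_ fun j hj => ?_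
    · rw [Lagrange.degree_basis hinj hmem, card_range]
      exact_mod_cast Nat.sub_lt (by omega) one_pos
    · rw [card_range, Polynomial.degree_lt_iff_coeff_zero]
      intro i hi
      rw [Polynomial.coeff_C_mul, Polynomial.finsetSum_coeff, sum_eq_zero, mul_zero]
      intro k hk
      rw [mem_range] at hk
      rw [mul_pow, ← Polynomial.C_pow, Polynomial.coeff_C_mul, Polynomial.coeff_X_pow,
        if_neg (by omega), mul_zero]
    · have hjn := mem_range.mp hj
      rw [Polynomial.eval_mul, Polynomial.eval_C, Polynomial.eval_finsetSum]
      simp only [Polynomial.eval_pow, Polynomial.eval_mul, Polynomial.eval_C, Polynomial.eval_X]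
      rcases eq_or_ne j m with rfl | h
      · rw [Lagrange.eval_basis_self hinj hmem, inv_mul_cancel₀ (hne j hm)]
        simp only [one_pow, sum_const, card_range, nsmul_one]
        linear_combination hpn
      · rw [Lagrange.eval_basis_of_ne h.symm hj]
        have h1 : (v m)⁻¹ * v j ≠ 1 := fun e => h (hinj hj hmem (by
          rwa [inv_mul_eq_one₀ (hne m hm), eq_comm] at e))
        rw [geom_sum_eq h1, mul_pow, inv_pow, hone m hm, hone j hjn]
        simp
  have h₀ := congrArg (Polynomial.eval 0) hbasis
  rw [Lagrange.basis, Polynomial.eval_prod, Polynomial.eval_mul, Polynomial.eval_C,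
    Polynomial.eval_finsetSum, sum_eq_single_of_mem 0 (mem_range.mpr (by omega))
      (fun k _ hk => by simp [hk])] at h₀
  rw [pow_zero, Polynomial.eval_one, mul_one] at h₀
  rw [← h₀]
  refine prod_congr rfl fun j _ => ?_
  simp only [Lagrange.basisDivisor, Polynomial.eval_mul, Polynomial.eval_C, Polynomial.eval_sub,
    Polynomial.eval_X]
  change v j / (v j - v m) = _
  rw [← neg_sub (v m), zero_sub, div_neg, mul_neg, div_eq_inv_mul]

lemma lagrangeWeight_expansion {n m : ℕ} (hn : p = 2 * n + 1) (hm : m < n) :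
    ∃ b, ReducesTo b (2 * ((2 * (m : ZMod p) + 1) ^ 2)⁻¹) ∧ lagrangeWeight n m = p ^ 2 * b := by
  have hodd : ∀ j : ℕ, ReducesTo (2 * (j : ℚ) + 1) (2 * (j : ZMod p) + 1) := fun j =>
    ((ReducesTo.ofNat 2).mul (ReducesTo.natCast j)).add .one
  have hm₀ : (2 * (m : ZMod p) + 1) ^ 2 ≠ 0 := pow_ne_zero 2 (zmod_odd_ne_zero hn hm)
  have hprod := ReducesTo.prod (s := (range n).erase m) fun j hj =>
    ((hodd j).pow 2).div (((hodd j).pow 2).sub ((hodd m).pow 2))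
      (zmod_odd_sq_sub_odd_sq_ne_zero hn (mem_range.mp (mem_erase.mp hj).2) hm
        (mem_erase.mp hj).1)
  rw [zmod_prod_erase hn hm] at hprod
  have hden := ((ReducesTo.self (p := p)).pow 2).sub ((hodd m).pow 2)
  rw [zero_pow two_ne_zero, zero_sub] at hden
  have hb := (hden.inv (neg_ne_zero.mpr hm₀)).mul hprod
  rw [inv_neg, neg_mul_neg, mul_comm _ (2 : ZMod p)] at hb
  refine ⟨_, hb, ?_⟩
  rw [lagrangeWeight, range_add_one, erase_insert_of_ne (by omega), prod_insert (by simp)]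
  have : (p : ℚ) = 2 * n + 1 := by rw [hn]; push_cast; rfl
  rw [this]
  ring

lemma prod_one_add_mul {ι : Type*} (s : Finset ι) (t : ℚ) (f : ι → ℚ) (ht : IsIntegralAt p t)
    (hf : ∀ i ∈ s, IsIntegralAt p (f i)) :
    ∃ c, IsIntegralAt p c ∧ ∏ i ∈ s, (1 + t * f i) = 1 + t * ∑ i ∈ s, f i + t ^ 2 * c := by
  classical
  induction s using Finset.induction_on with
  | empty => exact ⟨0, ReducesTo.zero.isIntegralAt, by simp⟩
  | insert i s hi ih =>
    obtain ⟨c, hc, e⟩ := ih fun j hj => hf j (mem_insert_of_mem hj)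
    have hi' := hf i (mem_insert_self i s)
    have hs : IsIntegralAt p (∑ j ∈ s, f j) := .sum fun j hj => hf j (mem_insert_of_mem hj)
    refine ⟨_, (hi'.mul hs).add (hc.add (ht.mul (hi'.mul hc))), ?_⟩
    rw [prod_insert hi, sum_insert hi, e]
    ring

lemma fourShift_prime_expansion {n : ℕ} (hn : p = 2 * n + 1) (hp : 3 < p) :
    ∃ e, ReducesTo e (-(7 / 48) * (bernoulli (p - 3) : ZMod p)) ∧
      fourShift p n * fourShift (-p) n = fourShift 0 n ^ 2 * (1 + p ^ 3 * e) := by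
  have h2 : (2 : ZMod p) ≠ 0 := by
    simpa using natCast_ne_zero_of_lt (p := p) (k := 2) (by omega) (by omega)
  have h3 : (3 : ZMod p) ≠ 0 := by
    simpa using natCast_ne_zero_of_lt (p := p) (k := 3) (by omega) (by omega)
  have h16 : (16 : ZMod p) ≠ 0 := by
    rw [show (16 : ZMod p) = 2 ^ 4 by norm_num]; exact pow_ne_zero 4 h2
  obtain ⟨h, hh, eh⟩ := congrAt_sum_inv_sq hn hp
  rw [sum_inv_cube_eq_bernoulli hn hp] at hh
  have h16' := ((ReducesTo.ofNat 16).inv h16).neg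
  obtain ⟨c, hc, ec⟩ := prod_one_add_mul (range n) ((p : ℚ) ^ 2)
    (fun i => -16⁻¹ * (((i + 1 : ℕ) : ℚ) ^ 2)⁻¹) ((IsIntegralAt.natCast p).pow 2) fun i hi => by
      rw [mem_range] at hi
      rw [← inv_pow]
      exact (h16'.mul ((reducesTo_inv_natCast (by omega) (by omega)).pow 2)).isIntegralAt
  refine ⟨-16⁻¹ * h + p * c, ?_, ?_⟩
  · have := (h16'.mul hh).add hc.prime_mul
    rw [add_zero] at this
    convert this using 1
    rw [show (48 : ZMod p) = 2 ^ 4 * 3 by norm_num, show (16 : ZMod p) = 2 ^ 4 by norm_num,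
      show (6 : ZMod p) = 2 * 3 by norm_num]
    field_simp
  · rw [← mul_sum, eh] at ec
    have : 1 + (p : ℚ) ^ 3 * (-16⁻¹ * h + p * c) =
        1 + (p : ℚ) ^ 2 * (-16⁻¹ * (p * h)) + (p ^ 2) ^ 2 * c := by ring
    rw [this, ← ec, fourShift, fourShift, fourShift, sq, ← prod_mul_distrib, ← prod_mul_distrib,
      ← prod_mul_distrib]
    refine prod_congr rfl fun i _ => ?_
    push_cast
    field_simp
    ring

lemma sum_deformedTerm_expansion {n : ℕ} (hn : p = 2 * n + 1) (hp : 3 < p) :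
    ∃ c, IsIntegralAt p c ∧ ∑ k ∈ range (n + 1), deformedTerm 0 k =
      (-1) ^ n * p + (-1) ^ n * (7 / 24) * (p : ℚ) ^ 4 * bernoulli (p - 3) + c * (p : ℚ) ^ 5 := by
  have h2 : (2 : ZMod p) ≠ 0 := by
    simpa using natCast_ne_zero_of_lt (p := p) (k := 2) (by omega) (by omega)
  have h3 : (3 : ZMod p) ≠ 0 := by
    simpa using natCast_ne_zero_of_lt (p := p) (k := 3) (by omega) (by omega)
  have h24 : (24 : ZMod p) ≠ 0 := by
    rw [show (24 : ZMod p) = 2 ^ 3 * 3 by norm_num]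
    exact mul_ne_zero (pow_ne_zero 3 h2) h3
  have hpq : (p : ℚ) = 2 * n + 1 := by rw [hn]; push_cast; rfl
  have hB : ReducesTo (bernoulli (p - 3)) (bernoulli (p - 3) : ZMod p) := by
    obtain ⟨a, ha⟩ := isIntegralAt_bernoulli (p := p) (n := p - 3) (by omega)
    exact ⟨ha.den_ne_zero, rfl⟩
  choose! a ha ea using fun m (hm : m ≤ n) => ratioSeq_expansion hn hp hm
  choose! b hb eb using fun m (hm : m < n) => lagrangeWeight_expansion hn hm
  obtain ⟨e, he, ee⟩ := fourShift_prime_expansion hn hp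
  have hD : fourShift 0 n ^ 2 ≠ 0 := pow_ne_zero 2 (fourShift_zero_ne_zero n)
  have hr : ReducesTo (ratioSeq (2 * p) n) (1 : ZMod p) := by
    rw [ea n le_rfl]
    simpa using ReducesTo.one.add (ha n le_rfl).isIntegralAt.prime_mul
  have hr₀ := hr.ne_zero one_ne_zero
  have hconst : fourShift 1 n * fourShift (-1) n = fourShift 0 n ^ 2 *
      (p * ((-1) ^ n * (1 + p ^ 3 * e) * (ratioSeq (2 * p) n)⁻¹)) := by
    have h := ratioSeq_mul_fourShift n n
    rw [← hpq, ee, show 4 * (n : ℚ) + 2 = 2 * p by rw [hpq]; ring] at h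
    linear_combination (ratioSeq (2 * (p : ℚ)) n)⁻¹ * -h -
      fourShift 1 n * fourShift (-1) n * inv_mul_cancel₀ hr₀
  have hA : ReducesTo ((-1) ^ n * (1 + (p : ℚ) ^ 3 * e) * (ratioSeq (2 * p) n)⁻¹)
      ((-1 : ZMod p) ^ n) := by
    have := ((ReducesTo.one (p := p).neg.pow n).mul (ReducesTo.one.add
      (((ReducesTo.self (p := p)).pow 3).mul he))).mul (hr.inv one_ne_zero)
    simpa using this
  have hS := sum_deformedTerm_zero_mul n
  have hw := sum_lagrangeWeight n
  rw [show 4 * (n : ℚ) + 2 = 2 * p by rw [hpq]; ring, hconst,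
    sum_range_succ fun m => ratioSeq (2 * (p : ℚ)) m * lagrangeWeight n m] at hS
  rw [sum_range_succ] at hw
  set A := (-1) ^ n * (1 + (p : ℚ) ^ 3 * e) * (ratioSeq (2 * p) n)⁻¹ with hAdef
  have hsum : ∑ m ∈ range n, ratioSeq (2 * p) m * lagrangeWeight n m =
      ratioSeq (2 * p) n * ∑ m ∈ range n, lagrangeWeight n m +
        p ^ 3 * ∑ m ∈ range n, (a m - a n) * b m := by
    rw [mul_sum, mul_sum, ← sum_add_distrib]
    refine sum_congr rfl fun m hm => ?_
    rw [mem_range] at hm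
    rw [ea m hm.le, ea n le_rfl, eb m hm]
    ring
  have hAr : A * ratioSeq (2 * p) n = (-1) ^ n * (1 + (p : ℚ) ^ 3 * e) := by
    rw [hAdef, inv_mul_cancel_right₀ hr₀]
  have hmain : ∑ k ∈ range (n + 1), deformedTerm 0 k =
      p * ((-1) ^ n * (1 + (p : ℚ) ^ 3 * e)) + p ^ 4 * (A * ∑ m ∈ range n, (a m - a n) * b m) := by
    apply mul_right_cancel₀ hD
    rw [hS, hsum, ← hAr]
    linear_combination fourShift 0 n ^ 2 * p * A * ratioSeq (2 * p) n * hw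
  have hred : ReducesTo ((-1) ^ n * e + A * ∑ m ∈ range n, (a m - a n) * b m -
      (-1) ^ n * (7 / 24) * bernoulli (p - 3)) (0 : ZMod p) := by
    have hs := ReducesTo.sum (s := range n) fun m hm =>
      ((ha m (mem_range.mp hm).le).sub (ha n le_rfl)).mul (hb m (mem_range.mp hm))
    have hneg := (ReducesTo.one (p := p)).neg.pow n
    have := ((hneg.mul he).add (hA.mul hs)).sub
      ((hneg.mul ((ReducesTo.ofNat 7).div (ReducesTo.ofNat 24) h24)).mul hB)
    convert this using 1
    have hE := sum_skipHarmonic hn hp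
    have : ∑ m ∈ range n, (4 * skipHarmonic (ZMod p) m - 4 * skipHarmonic (ZMod p) n) *
        (2 * ((2 * (m : ZMod p) + 1) ^ 2)⁻¹) = 8 * (7 / 128 * (bernoulli (p - 3) : ZMod p)) := by
      rw [← hE, mul_sum]
      exact sum_congr rfl fun m _ => by ring
    rw [this, show (48 : ZMod p) = 2 ^ 4 * 3 by norm_num,
      show (24 : ZMod p) = 2 ^ 3 * 3 by norm_num, show (128 : ZMod p) = 2 ^ 7 by norm_num]
    field_simp
    ring
  obtain ⟨c, hc, ec⟩ := hred.eq_mul_of_zero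
  exact ⟨c, hc, by rw [hmain]; linear_combination (p : ℚ) ^ 4 * ec⟩

end Expansion

theorem sun_supercongruence_p5 (p : ℕ) (hp : p.Prime) (hp3 : 3 < p) :
    ratCongr p 5
      (∑ n ∈ Finset.range ((p - 1) / 2 + 1),
        (6 * (n : ℚ) + 1) / 256 ^ n * ((2 * n).choose n : ℚ) ^ 3)
      ((-1 : ℚ) ^ ((p - 1) / 2) * p +
        (-1 : ℚ) ^ ((p - 1) / 2) * (7 / 24) * (p : ℚ) ^ 4 * bernoulli (p - 3)) := by
  have := Fact.mk hp
  have hn : p = 2 * ((p - 1) / 2) + 1 := by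
    obtain ⟨k, hk⟩ := hp.odd_of_ne_two (by omega)
    omega
  obtain ⟨c, hc, e⟩ := sum_deformedTerm_expansion hn hp3
  refine ⟨c, ?_, hc.not_dvd_den⟩
  rw [← Finset.sum_congr rfl fun k _ => deformedTerm_zero k, e]
  ring
end

section
/- Let p > 3 be a prime. Then ∑_{k=1}^{(p-1)/2} (p/2 - k)/((p+1-2k)(p+2k)) ≡ (1/2)·q_p(2) - (p/4)·q_p(2)^2 - 2p·q_p(2) + (1/6)·p^2·q_p(2)^3 + 4p^2·q_p(2) + p^2·q_p(2)^2 + (7/48)·p^2·B_{p-3} modulo p^3 (as rational numbers). -/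
open Finset

/-- The ring of rational numbers whose denominator is prime to `p`. -/
abbrev pIntegers (p : ℕ) [Fact p.Prime] : Subring ℚ := (Rat.padicValuation p).integer

section pIntegers

variable {p : ℕ} [Fact p.Prime]

theorem mem_pIntegers_iff {x : ℚ} : x ∈ pIntegers p ↔ ¬ p ∣ x.den :=
  Rat.padicValuation_le_one_iff

theorem inv_natCast_mem_pIntegers {k : ℕ} (hk : ¬ p ∣ k) : (k : ℚ)⁻¹ ∈ pIntegers p := by
  rw [mem_pIntegers_iff, Rat.inv_natCast_den]
  split_ifs
  · exact (Fact.out : p.Prime).not_dvd_one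
  · exact hk

theorem exists_sum_eq_add_mul {ι : Type*} {s : Finset ι} {f g : ι → ℚ} {m : ℚ}
    (h : ∀ i ∈ s, ∃ c ∈ pIntegers p, f i = g i + c * m) :
    ∃ c ∈ pIntegers p, ∑ i ∈ s, f i = ∑ i ∈ s, g i + c * m := by
  choose! c hc hfg using h
  refine ⟨∑ i ∈ s, c i, sum_mem hc, ?_⟩
  rw [sum_congr rfl hfg, sum_add_distrib, sum_mul]

/-- `B_n` is `p`-integral for `n ≤ p - 2`. -/
theorem bernoulli_mem_pIntegers {n : ℕ} (hn : n + 1 < p) : bernoulli n ∈ pIntegers p := by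
  induction n using Nat.strong_induction_on with
  | _ n ih =>
    have h := sum_bernoulli (n + 1)
    rw [sum_range_succ, Nat.choose_succ_self_right] at h
    have hB : bernoulli n = ((n + 1 : ℕ) : ℚ)⁻¹ * ((if n + 1 = 1 then 1 else 0) -
        ∑ k ∈ range n, ((n + 1).choose k : ℚ) * bernoulli k) := by
      rw [← h]
      field_simp
      ring
    rw [hB]
    refine mul_mem (inv_natCast_mem_pIntegers (Nat.not_dvd_of_pos_of_lt n.succ_pos hn))
      (sub_mem (by split_ifs <;> simp) (sum_mem fun k hk ↦ ?_))
    have hk' := mem_range.1 hk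
    exact mul_mem (natCast_mem _ _) (ih k hk' (by omega))

/-- `1 ^ m + ⋯ + (p - 1) ^ m ≡ p B_m` modulo `p ^ 2`. -/
theorem exists_sum_range_pow_eq {m : ℕ} (hm : m + 1 < p) :
    ∃ c ∈ pIntegers p, ∑ k ∈ range p, (k : ℚ) ^ m = p * bernoulli m + c * (p : ℚ) ^ 2 := by
  have hinv : ((m + 1 : ℕ) : ℚ)⁻¹ ∈ pIntegers p :=
    inv_natCast_mem_pIntegers (Nat.not_dvd_of_pos_of_lt m.succ_pos hm)
  obtain ⟨c, hc, h⟩ := exists_sum_eq_add_mul (p := p) (s := range m)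
    (f := fun i ↦ bernoulli i * ((m + 1).choose i) * (p : ℚ) ^ (m + 1 - i) / (m + 1))
    (g := fun _ ↦ 0) (m := (p : ℚ) ^ 2) (by
      intro i hi
      have hi' := mem_range.1 hi
      refine ⟨bernoulli i * ((m + 1).choose i) * (p : ℚ) ^ (m - 1 - i) * ((m + 1 : ℕ) : ℚ)⁻¹,
        mul_mem (mul_mem (mul_mem (bernoulli_mem_pIntegers (by omega)) (natCast_mem _ _))
          (pow_mem (natCast_mem _ _) _)) hinv, ?_⟩
      rw [show m + 1 - i = m - 1 - i + 2 by omega]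
      push_cast
      ring)
  refine ⟨c, hc, ?_⟩
  rw [sum_range_pow, sum_range_succ, h, Nat.choose_succ_self_right]
  simp only [sum_const_zero, zero_add, Nat.add_sub_cancel_left, pow_one]
  push_cast
  field_simp
  ring

/-- Fermat's little theorem in the ring of `p`-integers. -/
theorem exists_pow_sub_one_eq {k : ℕ} (hk : ¬ p ∣ k) :
    ∃ c ∈ pIntegers p, (k : ℚ) ^ (p - 1) = 1 + c * p := by
  have hcop : IsCoprime (k : ℤ) p := by
    rw [Nat.isCoprime_iff_coprime]
    exact ((Nat.Prime.coprime_iff_not_dvd Fact.out).2 hk).symm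
  obtain ⟨c, hc⟩ := (Int.ModEq.pow_card_sub_one_eq_one Fact.out hcop).symm.dvd
  refine ⟨c, intCast_mem _ _, ?_⟩
  have : (k : ℤ) ^ (p - 1) = 1 + c * p := by linarith
  exact_mod_cast this

/-- The elementary symmetric expansion of `∏ (1 - a i x)` up to third order, in terms of
power sums. -/
theorem exists_prod_one_sub_eq {ι : Type*} {s : Finset ι} {a : ι → ℚ} {x : ℚ}
    (ha : ∀ i ∈ s, a i ∈ pIntegers p) (hx : x ∈ pIntegers p) :
    ∃ c ∈ pIntegers p, 6 * ∏ i ∈ s, (1 - a i * x) =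
      6 - 6 * (∑ i ∈ s, a i) * x + 3 * ((∑ i ∈ s, a i) ^ 2 - ∑ i ∈ s, a i ^ 2) * x ^ 2 -
      ((∑ i ∈ s, a i) ^ 3 - 3 * (∑ i ∈ s, a i) * (∑ i ∈ s, a i ^ 2) + 2 * ∑ i ∈ s, a i ^ 3) * x ^ 3
      + c * x ^ 4 := by
  classical
  induction s using Finset.induction_on with
  | empty => exact ⟨0, zero_mem _, by simp⟩
  | insert i s hi ih =>
    have hs : ∀ j ∈ s, a j ∈ pIntegers p := fun j hj ↦ ha j (mem_insert_of_mem hj)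
    have hai := ha i (mem_insert_self i s)
    obtain ⟨c, hc, h⟩ := ih hs
    have h1 : ∑ j ∈ s, a j ∈ pIntegers p := sum_mem hs
    have h2 : ∑ j ∈ s, a j ^ 2 ∈ pIntegers p := sum_mem fun j hj ↦ pow_mem (hs j hj) 2
    have h3 : ∑ j ∈ s, a j ^ 3 ∈ pIntegers p := sum_mem fun j hj ↦ pow_mem (hs j hj) 3
    refine ⟨c + a i * (((∑ j ∈ s, a j) ^ 3 - (3 : ℕ) * (∑ j ∈ s, a j) * (∑ j ∈ s, a j ^ 2) +
      (2 : ℕ) * ∑ j ∈ s, a j ^ 3) - c * x),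
      add_mem hc (mul_mem hai (sub_mem (add_mem (sub_mem (pow_mem h1 3) (mul_mem (mul_mem
        (natCast_mem _ _) h1) h2)) (mul_mem (natCast_mem _ _) h3)) (mul_mem hc hx))), ?_⟩
    simp only [prod_insert hi, sum_insert hi]
    push_cast
    linear_combination (1 - a i * x) * h

end pIntegers

section Pairing

variable {M : Type*} [CommMonoid M]

@[to_additive]
theorem prod_Icc_eq_prod_reflect (f : ℕ → M) (n : ℕ) :
    ∏ k ∈ Icc 1 (2 * n), f k = ∏ k ∈ Icc 1 n, f k * f (2 * n + 1 - k) := by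
  have hsplit : Icc 1 (2 * n) = Icc 1 n ∪ Icc (n + 1) (2 * n) := by
    ext k
    simp only [mem_union, mem_Icc]
    omega
  have hdisj : Disjoint (Icc 1 n) (Icc (n + 1) (2 * n)) := by
    rw [Finset.disjoint_left]
    intro k
    simp only [mem_Icc]
    omega
  rw [hsplit, prod_union hdisj, prod_mul_distrib]
  congr 1
  refine prod_nbij' (fun k ↦ 2 * n + 1 - k) (fun k ↦ 2 * n + 1 - k) ?_ ?_ ?_ ?_ ?_ <;>
    intro k <;> simp only [mem_Icc] <;> intro hk
  · omega
  · omega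
  · omega
  · omega
  · congr 1
    omega

@[to_additive]
theorem prod_Icc_eq_prod_even_reflect (f : ℕ → M) (n : ℕ) :
    ∏ k ∈ Icc 1 (2 * n), f k = ∏ k ∈ Icc 1 n, f (2 * k) * f (2 * n + 1 - 2 * k) := by
  have hodd : ∏ k ∈ Icc 1 n, f (2 * n + 1 - 2 * k) = ∏ k ∈ Icc 1 n, f (2 * k - 1) := by
    refine prod_nbij' (fun k ↦ n + 1 - k) (fun k ↦ n + 1 - k) ?_ ?_ ?_ ?_ ?_ <;>
      intro k <;> simp only [mem_Icc] <;> intro hk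
    · omega
    · omega
    · omega
    · omega
    · congr 1
      omega
  rw [prod_mul_distrib, hodd, ← prod_mul_distrib]
  clear hodd
  induction n with
  | zero => simp
  | succ n ih =>
    rw [prod_Icc_succ_top (by omega), ← ih, show 2 * (n + 1) = 2 * n + 1 + 1 by ring,
      prod_Icc_succ_top (by omega), prod_Icc_succ_top (by omega), mul_assoc,
      mul_comm (f (2 * n + 1))]
    rfl

end Pairing

/-- Solving `F(p) = (1 + p q) F(p / 2)` for the leading power sum, where
`F(x) = 1 - S x + (S² - S₂) x² / 2 - ⋯` and `S₂ ≡ -(7/6) p S₃`. -/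
theorem exists_eq_of_prod_expansion {R : Subring ℚ} (h48 : (48 : ℚ)⁻¹ ∈ R)
    {p S S₂ S₃ q c c₁ c₂ : ℚ} (hp0 : p ≠ 0) (hp : p ∈ R) (hS : S ∈ R) (hS₃ : S₃ ∈ R) (hq : q ∈ R)
    (hc : c ∈ R) (hc₁ : c₁ ∈ R) (hc₂ : c₂ ∈ R) (hS₂ : S₂ = -(7 / 6) * p * S₃ + c * p ^ 2)
    (h : 6 - 6 * S * p + 3 * (S ^ 2 - S₂) * p ^ 2 - (S ^ 3 - 3 * S * S₂ + 2 * S₃) * p ^ 3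
        + c₁ * p ^ 4 =
      (1 + p * q) * (6 - 6 * S * (p / 2) + 3 * (S ^ 2 - S₂) * (p / 2) ^ 2
        - (S ^ 3 - 3 * S * S₂ + 2 * S₃) * (p / 2) ^ 3 + c₂ * (p / 2) ^ 4)) :
    ∃ d ∈ R, S = -2 * q + p * q ^ 2 - 2 / 3 * p ^ 2 * q ^ 3 + 7 / 24 * p ^ 2 * S₃ + d * p ^ 3 := by
  obtain ⟨s, hs, hs'⟩ : ∃ s ∈ R, s = (48 : ℚ)⁻¹ * (-56 * S₃) + c * p := by
    refine ⟨_, ?_, rfl⟩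
    repeat' first
      | assumption | exact ofNat_mem R _ | apply add_mem | apply mul_mem | apply neg_mem
  obtain ⟨T, hT, hT'⟩ : ∃ T ∈ R, T = S ^ 3 - 3 * S * (p * s) + 2 * S₃ := by
    refine ⟨_, ?_, rfl⟩
    repeat' first
      | assumption | exact ofNat_mem R _ | apply add_mem | apply sub_mem | apply mul_mem
      | apply pow_mem
  obtain ⟨w, hw, hw'⟩ : ∃ w ∈ R, w = c₁ + (48 : ℚ)⁻¹ * (36 * q * s + 6 * q * T
      - 3 * (1 + p * q) * c₂) := by
    refine ⟨_, ?_, rfl⟩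
    repeat' first
      | assumption | exact one_mem R | exact ofNat_mem R _ | apply add_mem | apply sub_mem
      | apply mul_mem
  obtain ⟨u, hu, hu'⟩ : ∃ u ∈ R, u = (48 : ℚ)⁻¹ * (36 * (S ^ 2 - p * s) + 48 * q * S
      - 14 * T * p - 12 * p * q * S ^ 2 + 16 * p ^ 2 * w) := by
    refine ⟨_, ?_, rfl⟩
    repeat' first
      | assumption | exact ofNat_mem R _ | apply add_mem | apply sub_mem | apply mul_mem
      | apply pow_mem
  have hSu : S = -2 * q + p * u := by
    refine mul_left_cancel₀ hp0 ?_
    subst hu' hw' hT' hs' hS₂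
    linear_combination -(1 / 3) * h
  obtain ⟨v, hv, hv'⟩ : ∃ v ∈ R, v = -4 * q * u + p * u ^ 2 := by
    refine ⟨_, ?_, rfl⟩
    repeat' first
      | assumption | exact ofNat_mem R _ | apply add_mem | apply mul_mem | apply pow_mem
      | apply neg_mem
  have hS_sq : S ^ 2 = 4 * q ^ 2 + p * v := by
    rw [hv', hSu]
    ring
  obtain ⟨u₂, hu₂, hu₂'⟩ : ∃ u₂ ∈ R, u₂ = (48 : ℚ)⁻¹ * (36 * (v - s) + 48 * q * u
      - 14 * T - 12 * q * S ^ 2 + 16 * p * w) := by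
    refine ⟨_, ?_, rfl⟩
    repeat' first
      | assumption | exact ofNat_mem R _ | apply add_mem | apply sub_mem | apply mul_mem
      | apply pow_mem
  have huu₂ : u = q ^ 2 + p * u₂ := by
    linear_combination hu' + 3 / 4 * hS_sq + q * hSu - p * hu₂'
  obtain ⟨T₁, hT₁, hT₁'⟩ : ∃ T₁ ∈ R, T₁ = 12 * q ^ 2 * u - 6 * q * p * u ^ 2 + p ^ 2 * u ^ 3
      - 3 * S * s := by
    refine ⟨_, ?_, rfl⟩
    repeat' first
      | assumption | exact ofNat_mem R _ | apply add_mem | apply sub_mem | apply mul_mem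
      | apply pow_mem
  have hTT₁ : T = -8 * q ^ 3 + 2 * S₃ + p * T₁ := by
    rw [hT', hT₁', hSu]
    ring
  obtain ⟨d, hd, hd'⟩ : ∃ d ∈ R, d = (48 : ℚ)⁻¹ * (36 * (-4 * q * u₂ + u ^ 2 - c) + 48 * q * u₂
      + 16 * w - 14 * T₁ - 12 * q * v) := by
    refine ⟨_, ?_, rfl⟩
    repeat' first
      | assumption | exact ofNat_mem R _ | apply add_mem | apply sub_mem | apply mul_mem
      | apply pow_mem | apply neg_mem
  refine ⟨d, hd, ?_⟩
  linear_combination hSu + p * huu₂ + p ^ 2 * hu₂' - p ^ 3 * hd' + 3 / 4 * p ^ 2 * hv' -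
    3 / 4 * p ^ 2 * hs' - 7 / 24 * p ^ 2 * hTT₁ - 1 / 4 * p ^ 2 * q * hS_sq -
    2 * p ^ 2 * q * huu₂

theorem not_dvd_of_mem_Icc_half {p n k : ℕ} (hn : p = 2 * n + 1) (hk : k ∈ Icc 1 n) :
    ¬ p ∣ k := by
  rw [mem_Icc] at hk
  exact Nat.not_dvd_of_pos_of_lt (by omega) (by omega)

/-- The exact identity `∏ (1 - p / k) = 2 ^ (p - 1) ∏ (1 - p / (2 k))` over
`1 ≤ k ≤ (p - 1) / 2`. -/
theorem prod_one_sub_eq_two_pow_mul {p n : ℕ} (hn : p = 2 * n + 1) :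
    ∏ k ∈ Icc 1 n, (1 - (k : ℚ)⁻¹ * p) =
      2 ^ (p - 1) * ∏ k ∈ Icc 1 n, (1 - (k : ℚ)⁻¹ * (p / 2)) := by
  have h := (prod_Icc_eq_prod_reflect (fun k : ℕ ↦ (k : ℚ)) n).symm.trans
    (prod_Icc_eq_prod_even_reflect (fun k : ℕ ↦ (k : ℚ)) n)
  have hk0 : ∀ k ∈ Icc 1 n, (k : ℚ) ≠ 0 := fun k hk ↦ by
    rw [mem_Icc] at hk
    exact_mod_cast (by omega : k ≠ 0)
  have h₁ : ∏ k ∈ Icc 1 n, (k : ℚ) * ((2 * n + 1 - k : ℕ) : ℚ) =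
      (∏ k ∈ Icc 1 n, -(k : ℚ) ^ 2) * ∏ k ∈ Icc 1 n, (1 - (k : ℚ)⁻¹ * p) := by
    rw [← prod_mul_distrib]
    refine prod_congr rfl fun k hk ↦ ?_
    have := hk0 k hk
    rw [mem_Icc] at hk
    rw [← hn, Nat.cast_sub (by omega)]
    field_simp
    ring
  have h₂ : ∏ k ∈ Icc 1 n, ((2 * k : ℕ) : ℚ) * ((2 * n + 1 - 2 * k : ℕ) : ℚ) =
      (∏ k ∈ Icc 1 n, -(k : ℚ) ^ 2) *
        (2 ^ (p - 1) * ∏ k ∈ Icc 1 n, (1 - (k : ℚ)⁻¹ * (p / 2))) := by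
    have h4 : (2 : ℚ) ^ (p - 1) = ∏ k ∈ Icc 1 n, (4 : ℚ) := by
      rw [prod_const, Nat.card_Icc, show p - 1 = 2 * n by omega, pow_mul, Nat.add_sub_cancel]
      norm_num
    rw [h4, ← prod_mul_distrib, ← prod_mul_distrib]
    refine prod_congr rfl fun k hk ↦ ?_
    have := hk0 k hk
    rw [mem_Icc] at hk
    rw [← hn, Nat.cast_sub (by omega)]
    push_cast
    field_simp
    ring
  rw [h₁, h₂] at h
  exact mul_left_cancel₀ (prod_ne_zero_iff.2 fun k hk ↦ neg_ne_zero.2 (pow_ne_zero 2 (hk0 k hk))) h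

section HalfSums

variable {p : ℕ} [Fact p.Prime]

theorem inv_mem_pIntegers_of_mem_Icc_half {n k : ℕ} (hn : p = 2 * n + 1) (hk : k ∈ Icc 1 n) :
    (k : ℚ)⁻¹ ∈ pIntegers p :=
  inv_natCast_mem_pIntegers (not_dvd_of_mem_Icc_half hn hk)

theorem inv_fortyEight_mem_pIntegers (hp3 : 3 < p) : (48 : ℚ)⁻¹ ∈ pIntegers p := by
  have hp : p.Prime := Fact.out
  have h : ¬ p ∣ 48 := by
    intro h
    have h' : p ∣ 2 ^ 4 * 3 := h
    rcases hp.dvd_mul.1 h' with h | h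
    · exact absurd (Nat.le_of_dvd two_pos (hp.dvd_of_dvd_pow h)) (by omega)
    · exact absurd (Nat.le_of_dvd three_pos h) (by omega)
  exact_mod_cast inv_natCast_mem_pIntegers h

/-- `(p - j)⁻² ≡ j⁻² + 2 p j⁻³` modulo `p ^ 2`. -/
theorem exists_inv_sub_sq_eq {j : ℕ} (hj : 0 < j) (hjp : j < p) :
    ∃ c ∈ pIntegers p, ((p - j : ℕ) : ℚ)⁻¹ ^ 2 =
      (j : ℚ)⁻¹ ^ 2 + 2 * p * (j : ℚ)⁻¹ ^ 3 + c * (p : ℚ) ^ 2 := by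
  have h1 : (j : ℚ)⁻¹ ∈ pIntegers p :=
    inv_natCast_mem_pIntegers (Nat.not_dvd_of_pos_of_lt hj hjp)
  have h2 : ((p - j : ℕ) : ℚ)⁻¹ ∈ pIntegers p :=
    inv_natCast_mem_pIntegers (Nat.not_dvd_of_pos_of_lt (by omega) (by omega))
  refine ⟨((3 * j : ℕ) - (2 * p : ℕ)) * (j : ℚ)⁻¹ ^ 3 * ((p - j : ℕ) : ℚ)⁻¹ ^ 2,
    mul_mem (mul_mem (sub_mem (natCast_mem _ _) (natCast_mem _ _)) (pow_mem h1 3))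
      (pow_mem h2 2), ?_⟩
  have h0 : (j : ℚ) ≠ 0 := by exact_mod_cast hj.ne'
  have h0' : (p : ℚ) - j ≠ 0 := sub_ne_zero.2 (by exact_mod_cast hjp.ne')
  push_cast [Nat.cast_sub hjp.le]
  field_simp
  ring

/-- `(p - j) ^ m ≡ j ^ m - m p j ^ (m - 1)` modulo `p ^ 2` for even `m`. -/
theorem exists_sub_pow_eq {j m : ℕ} (hm : Even m) (hm0 : m ≠ 0) (hjp : j ≤ p) :
    ∃ c ∈ pIntegers p, ((p - j : ℕ) : ℚ) ^ m =
      (j : ℚ) ^ m - m * p * (j : ℚ) ^ (m - 1) + c * (p : ℚ) ^ 2 := by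
  obtain ⟨c, hc⟩ := Polynomial.powAddExpansion (-(j : ℤ)) (p : ℤ) m
  have hodd : Odd (m - 1) := Nat.Even.sub_odd (by omega) hm odd_one
  refine ⟨c, intCast_mem _ _, ?_⟩
  rw [hm.neg_pow, hodd.neg_pow] at hc
  have hc' := congrArg (Int.cast : ℤ → ℚ) hc
  push_cast at hc'
  rw [Nat.cast_sub hjp, sub_eq_neg_add, hc']
  ring

/-- `∑ k⁻² ≡ -(7/6) p ∑ k⁻³` modulo `p ^ 2`, the sums being over `1 ≤ k ≤ (p - 1) / 2`. -/
theorem exists_sum_inv_sq_eq {n : ℕ} (hn : p = 2 * n + 1) (hp3 : 3 < p) :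
    ∃ c ∈ pIntegers p, ∑ k ∈ Icc 1 n, (k : ℚ)⁻¹ ^ 2 =
      -(7 / 6) * p * ∑ k ∈ Icc 1 n, (k : ℚ)⁻¹ ^ 3 + c * (p : ℚ) ^ 2 := by
  obtain ⟨a, ha, h₁⟩ := exists_sum_eq_add_mul (p := p) (s := Icc 1 n)
    (f := fun k ↦ ((2 * n + 1 - k : ℕ) : ℚ)⁻¹ ^ 2)
    (g := fun k ↦ (k : ℚ)⁻¹ ^ 2 + 2 * p * (k : ℚ)⁻¹ ^ 3) (m := (p : ℚ) ^ 2) (by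
      intro k hk
      rw [mem_Icc] at hk
      rw [← hn]
      exact exists_inv_sub_sq_eq (by omega) (by omega))
  obtain ⟨b, hb, h₂⟩ := exists_sum_eq_add_mul (p := p) (s := Icc 1 n)
    (f := fun k ↦ ((2 * n + 1 - 2 * k : ℕ) : ℚ)⁻¹ ^ 2)
    (g := fun k ↦ ((2 * k : ℕ) : ℚ)⁻¹ ^ 2 + 2 * p * ((2 * k : ℕ) : ℚ)⁻¹ ^ 3)
    (m := (p : ℚ) ^ 2) (by
      intro k hk
      rw [mem_Icc] at hk
      rw [← hn]
      exact exists_inv_sub_sq_eq (by omega) (by omega))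
  have h := (sum_Icc_eq_sum_reflect (fun k : ℕ ↦ (k : ℚ)⁻¹ ^ 2) n).symm.trans
    (sum_Icc_eq_sum_even_reflect (fun k : ℕ ↦ (k : ℚ)⁻¹ ^ 2) n)
  simp only [sum_add_distrib] at h h₁ h₂
  rw [h₁, h₂] at h
  simp only [Nat.cast_mul, Nat.cast_ofNat, mul_inv, mul_pow, ← mul_sum] at h
  refine ⟨(48 : ℚ)⁻¹ * (32 : ℕ) * (b - a), mul_mem (mul_mem (inv_fortyEight_mem_pIntegers hp3)
    (natCast_mem _ _)) (sub_mem hb ha), ?_⟩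
  push_cast
  linear_combination 2 / 3 * h

/-- `∑ k⁻³ ≡ ∑ k ^ (p - 4)` modulo `p`, the sums being over `1 ≤ k ≤ (p - 1) / 2`. -/
theorem exists_sum_pow_sub_four_eq {n : ℕ} (hn : p = 2 * n + 1) (hp3 : 3 < p) :
    ∃ c ∈ pIntegers p, ∑ k ∈ Icc 1 n, (k : ℚ) ^ (p - 4) =
      ∑ k ∈ Icc 1 n, (k : ℚ)⁻¹ ^ 3 + c * p := by
  refine exists_sum_eq_add_mul fun k hk ↦ ?_
  obtain ⟨c, hc, h⟩ := exists_pow_sub_one_eq (not_dvd_of_mem_Icc_half hn hk)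
  refine ⟨c * (k : ℚ)⁻¹ ^ 3,
    mul_mem hc (pow_mem (inv_mem_pIntegers_of_mem_Icc_half hn hk) 3), ?_⟩
  have h0 : (k : ℚ) ≠ 0 := by
    rw [mem_Icc] at hk
    exact_mod_cast (by omega : k ≠ 0)
  rw [show p - 1 = p - 4 + 3 by omega, pow_add] at h
  field_simp
  linear_combination h

theorem fermatQ_mem_and_two_pow_eq (hp3 : 3 < p) :
    fermatQ p ∈ pIntegers p ∧ (2 : ℚ) ^ (p - 1) = 1 + p * fermatQ p := by
  have hp0 : (p : ℚ) ≠ 0 := by exact_mod_cast (by omega : p ≠ 0)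
  obtain ⟨c, hc, h⟩ := exists_pow_sub_one_eq (p := p) (k := 2)
    (Nat.not_dvd_of_pos_of_lt two_pos (by omega))
  have h' : (2 : ℚ) ^ (p - 1) = 1 + c * p := by exact_mod_cast h
  have hq : fermatQ p = c := by
    rw [fermatQ, h']
    field_simp
    ring
  exact ⟨hq ▸ hc, by rw [hq, h', mul_comm]⟩

/-- `∑ k⁻³ ≡ -2 B_{p-3}` modulo `p`, the sum being over `1 ≤ k ≤ (p - 1) / 2`. -/
theorem exists_sum_inv_cube_eq {n : ℕ} (hn : p = 2 * n + 1) (hp3 : 3 < p) :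
    ∃ c ∈ pIntegers p, ∑ k ∈ Icc 1 n, (k : ℚ)⁻¹ ^ 3 = -2 * bernoulli (p - 3) + c * p := by
  have hp0 : (p : ℚ) ≠ 0 := by exact_mod_cast (by omega : p ≠ 0)
  obtain ⟨hq, h2⟩ := fermatQ_mem_and_two_pow_eq hp3
  have hm : Even (p - 3) := ⟨n - 1, by omega⟩
  have hm1 : p - 3 - 1 = p - 4 := by omega
  obtain ⟨a, ha, h₁⟩ := exists_sum_eq_add_mul (p := p) (s := Icc 1 n)
    (f := fun k ↦ ((2 * n + 1 - k : ℕ) : ℚ) ^ (p - 3))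
    (g := fun k ↦ (k : ℚ) ^ (p - 3) - (p - 3 : ℕ) * p * (k : ℚ) ^ (p - 4))
    (m := (p : ℚ) ^ 2) (by
      intro k hk
      rw [mem_Icc] at hk
      rw [← hn, ← hm1]
      exact exists_sub_pow_eq hm (by omega) (by omega))
  obtain ⟨b, hb, h₂⟩ := exists_sum_eq_add_mul (p := p) (s := Icc 1 n)
    (f := fun k ↦ ((2 * n + 1 - 2 * k : ℕ) : ℚ) ^ (p - 3))
    (g := fun k ↦ ((2 * k : ℕ) : ℚ) ^ (p - 3) - (p - 3 : ℕ) * p * ((2 * k : ℕ) : ℚ) ^ (p - 4))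
    (m := (p : ℚ) ^ 2) (by
      intro k hk
      rw [mem_Icc] at hk
      rw [← hn, ← hm1]
      exact exists_sub_pow_eq hm (by omega) (by omega))
  obtain ⟨e, he, h₃⟩ := exists_sum_range_pow_eq (p := p) (m := p - 3) (by omega)
  obtain ⟨d, hd, h₄⟩ := exists_sum_pow_sub_four_eq hn hp3
  have hrange : ∑ k ∈ range p, (k : ℚ) ^ (p - 3) = ∑ k ∈ Icc 1 (2 * n), (k : ℚ) ^ (p - 3) := by
    rw [range_eq_Ico, sum_eq_sum_Ico_succ_bot (by omega : 0 < p), Nat.cast_zero,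
      zero_pow (by omega), zero_add]
    refine sum_congr ?_ fun _ _ ↦ rfl
    ext k
    simp only [mem_Ico, mem_Icc]
    omega
  have h₅ := sum_Icc_eq_sum_reflect (fun k : ℕ ↦ (k : ℚ) ^ (p - 3)) n
  have h₆ := sum_Icc_eq_sum_even_reflect (fun k : ℕ ↦ (k : ℚ) ^ (p - 3)) n
  rw [← hrange, h₃] at h₅ h₆
  simp only [sum_add_distrib, sum_sub_distrib] at h₁ h₂ h₅ h₆
  rw [h₁] at h₅
  rw [h₂] at h₆
  simp only [Nat.cast_mul, Nat.cast_ofNat, mul_pow, ← mul_sum] at h₅ h₆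
  rw [h₄] at h₅ h₆
  have h2a : (2 : ℚ) ^ (p - 3) = (1 + p * fermatQ p) / 4 := by
    rw [← h2, show p - 1 = p - 3 + 2 by omega, pow_add]
    ring
  have h2b : (2 : ℚ) ^ (p - 4) = (1 + p * fermatQ p) / 8 := by
    rw [← h2, show p - 1 = p - 4 + 3 by omega, pow_add]
    ring
  rw [h2a, h2b] at h₆
  set C := ∑ k ∈ Icc 1 n, (k : ℚ)⁻¹ ^ 3
  have hC : C ∈ pIntegers p :=
    sum_mem fun k hk ↦ pow_mem (inv_mem_pIntegers_of_mem_Icc_half hn hk) 3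
  have hB : bernoulli (p - 3) ∈ pIntegers p := bernoulli_mem_pIntegers (by omega)
  have hpR : (p : ℚ) ∈ pIntegers p := natCast_mem _ _
  have h48 := inv_fortyEight_mem_pIntegers hp3
  refine ⟨(48 : ℚ)⁻¹ * (16 * (2 * fermatQ p * (bernoulli (p - 3) + e * p) - 6 * e +
    (1 + p * fermatQ p - 3 * fermatQ p) * (C + d * p) - 2 * (1 + p * fermatQ p) * a + 8 * b)) - d,
    ?_, ?_⟩
  · repeat' first
      | assumption | exact one_mem _ | exact ofNat_mem _ _ | apply add_mem | apply sub_mem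
      | apply mul_mem
  · have hcast : ((p - 3 : ℕ) : ℚ) = p - 3 := by
      push_cast [Nat.cast_sub hp3.le]
      ring
    rw [hcast] at h₅ h₆
    refine mul_left_cancel₀ hp0 ?_
    linear_combination 8 / 3 * h₆ - 2 / 3 * (1 + p * fermatQ p) * h₅

/-- The harmonic number `H_{(p-1)/2}` modulo `p ^ 3`. -/
theorem exists_sum_inv_eq {n : ℕ} (hn : p = 2 * n + 1) (hp3 : 3 < p) :
    ∃ c ∈ pIntegers p, ∑ k ∈ Icc 1 n, (k : ℚ)⁻¹ =
      -2 * fermatQ p + p * fermatQ p ^ 2 - 2 / 3 * p ^ 2 * fermatQ p ^ 3 -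
        7 / 12 * p ^ 2 * bernoulli (p - 3) + c * (p : ℚ) ^ 3 := by
  have hp0 : (p : ℚ) ≠ 0 := by exact_mod_cast (by omega : p ≠ 0)
  have hpR : (p : ℚ) ∈ pIntegers p := natCast_mem _ _
  have h48 := inv_fortyEight_mem_pIntegers hp3
  have hinv : ∀ k ∈ Icc 1 n, (k : ℚ)⁻¹ ∈ pIntegers p :=
    fun k hk ↦ inv_mem_pIntegers_of_mem_Icc_half hn hk
  obtain ⟨hq, h2⟩ := fermatQ_mem_and_two_pow_eq hp3
  have hp2 : (p : ℚ) / 2 ∈ pIntegers p := by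
    rw [show (p : ℚ) / 2 = (48 : ℚ)⁻¹ * (24 * p) by ring]
    exact mul_mem h48 (mul_mem (ofNat_mem _ _) hpR)
  obtain ⟨c, hc, hS₂⟩ := exists_sum_inv_sq_eq hn hp3
  obtain ⟨b, hb, hS₃⟩ := exists_sum_inv_cube_eq hn hp3
  obtain ⟨c₁, hc₁, h₁⟩ := exists_prod_one_sub_eq hinv hpR
  obtain ⟨c₂, hc₂, h₂⟩ := exists_prod_one_sub_eq hinv hp2
  obtain ⟨d, hd, h⟩ := exists_eq_of_prod_expansion h48 hp0 hpR (sum_mem hinv)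
    (sum_mem fun k hk ↦ pow_mem (hinv k hk) 3) hq hc hc₁ hc₂ hS₂ (by
      rw [← h₁, ← h₂, ← h2, prod_one_sub_eq_two_pow_mul hn]
      ring)
  refine ⟨d + (48 : ℚ)⁻¹ * (14 * b),
    add_mem hd (mul_mem h48 (mul_mem (ofNat_mem _ _) hb)), ?_⟩
  linear_combination h + 7 / 24 * p ^ 2 * hS₃

/-- `∑ 1 / (p + 2 k) ≡ H_{(p-1)/2} / 2` modulo `p ^ 2`, the sum being over
`1 ≤ k ≤ (p - 1) / 2`. -/
theorem exists_sum_inv_add_two_mul_eq {n : ℕ} (hn : p = 2 * n + 1) (hp3 : 3 < p) :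
    ∃ c ∈ pIntegers p, ∑ k ∈ Icc 1 n, ((p : ℚ) + 2 * k)⁻¹ =
      (∑ k ∈ Icc 1 n, (k : ℚ)⁻¹) / 2 + c * (p : ℚ) ^ 2 := by
  have h48 := inv_fortyEight_mem_pIntegers hp3
  have hpR : (p : ℚ) ∈ pIntegers p := natCast_mem _ _
  obtain ⟨a, ha, h⟩ := exists_sum_eq_add_mul (p := p) (s := Icc 1 n)
    (f := fun k ↦ ((p : ℚ) + 2 * k)⁻¹)
    (g := fun k ↦ 1 / 2 * (k : ℚ)⁻¹ - p / 4 * (k : ℚ)⁻¹ ^ 2) (m := (p : ℚ) ^ 2) (by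
      intro k hk
      have hinv := inv_mem_pIntegers_of_mem_Icc_half hn hk
      rw [mem_Icc] at hk
      have hdvd : ¬ p ∣ p + 2 * k := fun h ↦ Nat.not_dvd_of_pos_of_lt (by omega)
        (by omega : 2 * k < p) ((Nat.dvd_add_right dvd_rfl).1 h)
      refine ⟨(48 : ℚ)⁻¹ * (12 * ((k : ℚ)⁻¹ ^ 2 * ((p + 2 * k : ℕ) : ℚ)⁻¹)),
        mul_mem h48 (mul_mem (ofNat_mem _ _) (mul_mem (pow_mem hinv 2)
          (inv_natCast_mem_pIntegers hdvd))), ?_⟩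
      have h0 : (k : ℚ) ≠ 0 := by exact_mod_cast (by omega : k ≠ 0)
      have h0' : (p : ℚ) + 2 * k ≠ 0 := by positivity
      push_cast
      field_simp
      ring)
  obtain ⟨c, hc, hS₂⟩ := exists_sum_inv_sq_eq hn hp3
  have hS₃ : ∑ k ∈ Icc 1 n, (k : ℚ)⁻¹ ^ 3 ∈ pIntegers p :=
    sum_mem fun k hk ↦ pow_mem (inv_mem_pIntegers_of_mem_Icc_half hn hk) 3
  simp only [sum_sub_distrib, ← mul_sum] at h
  refine ⟨a + (48 : ℚ)⁻¹ * (14 * (∑ k ∈ Icc 1 n, (k : ℚ)⁻¹ ^ 3) - 12 * (c * p)),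
    add_mem ha (mul_mem h48 (sub_mem (mul_mem (ofNat_mem _ _) hS₃)
      (mul_mem (ofNat_mem _ _) (mul_mem hc hpR)))), ?_⟩
  linear_combination h - p / 4 * hS₂

end HalfSums

/-- Partial fractions for the summand of `sum_aux_congr`. -/
theorem two_mul_add_one_mul_sum_eq {p n : ℕ} (hn : p = 2 * n + 1) :
    (2 * p + 1) * ∑ k ∈ Icc 1 n,
      ((p : ℚ) / 2 - k) / (((p : ℚ) + 1 - 2 * k) * ((p : ℚ) + 2 * k)) =
    -(1 / 4) * ∑ k ∈ Icc 1 n, (k : ℚ)⁻¹ + p * ∑ k ∈ Icc 1 n, ((p : ℚ) + 2 * k)⁻¹ := by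
  have hrefl : ∑ k ∈ Icc 1 n, (k : ℚ)⁻¹ = ∑ k ∈ Icc 1 n, ((n + 1 - k : ℕ) : ℚ)⁻¹ := by
    refine sum_nbij' (fun k ↦ n + 1 - k) (fun k ↦ n + 1 - k) ?_ ?_ ?_ ?_ ?_ <;>
      intro k <;> simp only [mem_Icc] <;> intro hk
    · omega
    · omega
    · omega
    · omega
    · rw [show n + 1 - (n + 1 - k) = k by omega]
  rw [hrefl, mul_sum, mul_sum, mul_sum, ← sum_add_distrib]
  refine sum_congr rfl fun k hk ↦ ?_
  rw [mem_Icc] at hk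
  have hp : (p : ℚ) = 2 * n + 1 := by exact_mod_cast hn
  have h₁ : ((n + 1 - k : ℕ) : ℚ) = (p + 1 - 2 * k) / 2 := by
    rw [Nat.cast_sub (by omega), hp]
    push_cast
    ring
  have h₂ : (p : ℚ) + 1 - 2 * k ≠ 0 := by
    have : ((n + 1 - k : ℕ) : ℚ) ≠ 0 := by exact_mod_cast (by omega : n + 1 - k ≠ 0)
    rw [h₁] at this
    intro h
    simp [h] at this
  have h₃ : (p : ℚ) + 2 * k ≠ 0 := by
    rw [hp]
    positivity
  rw [h₁]
  field_simp
  ring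

theorem sum_aux_congr (p : ℕ) (hp : p.Prime) (hp3 : 3 < p) :
    ratCongr p 3
      (∑ k ∈ Finset.Icc 1 ((p - 1) / 2),
        ((p : ℚ) / 2 - k) / (((p : ℚ) + 1 - 2 * k) * ((p : ℚ) + 2 * k)))
      ((1 / 2) * fermatQ p - ((p : ℚ) / 4) * fermatQ p ^ 2 - 2 * p * fermatQ p +
        (1 / 6) * (p : ℚ) ^ 2 * fermatQ p ^ 3 + 4 * (p : ℚ) ^ 2 * fermatQ p +
        (p : ℚ) ^ 2 * fermatQ p ^ 2 + (7 / 48) * (p : ℚ) ^ 2 * bernoulli (p - 3)) := by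
  have : Fact p.Prime := ⟨hp⟩
  obtain ⟨n, hn⟩ := hp.odd_of_ne_two (by omega)
  rw [show (p - 1) / 2 = n by omega]
  have hsum := two_mul_add_one_mul_sum_eq hn
  obtain ⟨a, ha, hH⟩ := exists_sum_inv_eq hn hp3
  obtain ⟨b, hb, hT⟩ := exists_sum_inv_add_two_mul_eq hn hp3
  obtain ⟨hq, -⟩ := fermatQ_mem_and_two_pow_eq hp3
  have h48 := inv_fortyEight_mem_pIntegers hp3
  have hpR : (p : ℚ) ∈ pIntegers p := natCast_mem _ _
  have hB : bernoulli (p - 3) ∈ pIntegers p := bernoulli_mem_pIntegers (by omega)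
  have hunit : (2 * (p : ℚ) + 1)⁻¹ ∈ pIntegers p := by
    have h : ¬ p ∣ 2 * p + 1 := fun h ↦
      hp.not_dvd_one ((Nat.dvd_add_right (Dvd.intro_left 2 rfl)).1 h)
    exact_mod_cast inv_natCast_mem_pIntegers h
  rw [hT, hH] at hsum
  generalize fermatQ p = q at *
  generalize bernoulli (p - 3) = B at *
  refine ⟨(2 * (p : ℚ) + 1)⁻¹ * ((48 : ℚ)⁻¹ * (192 * (-2 * q + p * q ^ 2) -
    p ^ 2 * (128 * q ^ 3 + 112 * B) + 12 * ((2 * p - 1) * a) + (2 * p + 1) *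
    (-32 * q ^ 3 - 28 * B - 96 * q ^ 2 + p * (64 * q ^ 3 + 56 * B))) + b), ?_, ?_⟩
  · have h0 : 2 * (p : ℚ) + 1 ≠ 0 := by positivity
    refine mul_left_cancel₀ h0 ?_
    rw [mul_sub, hsum, ← mul_assoc, mul_inv_cancel_left₀ h0]
    ring
  · rw [← mem_pIntegers_iff]
    repeat' first
      | assumption | exact one_mem _ | exact ofNat_mem _ _ | apply add_mem | apply sub_mem
      | apply mul_mem | apply pow_mem | apply neg_mem
end
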